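/- In the d_5 tower, L_1 ≡ 21·t^4 (mod 49), L_2 ≡ 14·t (mod 49), and L_3 ≡ 35·(p_0 + p_1)·t^3 (mod 49), where congruence of Laurent series means all corresponding coefficients are congruent. -/

import Mathlib

noncomputable section

/-- `J b = ∏_{k=1}^∞ (1 - q^{b·k})` as a formal power series with integer coefficients. -/
def J (b : ℕ) : PowerSeries ℤ :=
  PowerSeries.mk fun n =>
    PowerSeries.coeff n
      (∏ k ∈ Finset.range (n + 1), (1 - (PowerSeries.X : PowerSeries ℤ) ^ (b * (k + 1))))

section analytic
open UpperHalfPlane hiding I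
open Complex ModularForm Derivative
open scoped Manifold MatrixGroups Topology

lemma hasSum_cg {f g : ℕ → ℂ} {a : ℂ} (h : ∀ m, f m = g m) (hg : HasSum g a) : HasSum f a := by
  rwa [show f = g from funext h]

structure HasQ (f : ℍ → ℂ) (c : PowerSeries ℂ) : Prop where
  md : MDiff f
  sum : ∀ τ : ℍ, HasSum (fun m : ℕ => PowerSeries.coeff m c • Function.Periodic.qParam 1 τ ^ m) (f τ)

lemma HasQ.bdd {f c} (h : HasQ f c) : IsBoundedAtImInfty f :=
  isBoundedAtImInfty_of_hasSum_qExpansion one_pos h.sum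

lemma HasQ.per {f c} (h : HasQ f c) : Function.Periodic (f ∘ ofComplex) (1:ℝ) := by
  intro w
  by_cases hw : 0 < w.im
  · have hw' : 0 < (w + (1:ℝ)).im := by simpa using hw
    simp only [Function.comp_apply, ofComplex_apply_of_im_pos hw, ofComplex_apply_of_im_pos hw']
    have h1 := h.sum ⟨w, hw⟩
    have h2 := h.sum ⟨w + (1:ℝ), hw'⟩
    have : Function.Periodic.qParam 1 (w + (1:ℝ)) = Function.Periodic.qParam 1 w := by
      rw [Function.Periodic.qParam, Function.Periodic.qParam]
      simp [mul_add, Complex.exp_add]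
    simp only [this] at h2
    exact h2.unique h1
  · have hw' : ¬ 0 < (w + (1:ℝ)).im := by simpa using hw
    simp only [Function.comp_apply]
    rw [ofComplex_apply_of_im_nonpos (not_lt.mp hw), ofComplex_apply_of_im_nonpos (not_lt.mp hw')]

lemma HasQ.ana {f c} (h : HasQ f c) : AnalyticAt ℂ (cuspFunction 1 f) 0 :=
  analyticAt_cuspFunction_zero one_pos h.per h.md h.bdd

lemma HasQ.coeff_eq {f c} (h : HasQ f c) (m : ℕ) :
    PowerSeries.coeff m c = (qExpansion 1 f).coeff m := by
  have h1 := (hasFPowerSeriesOnBall_cuspFunction one_pos h.ana h.sum).hasFPowerSeriesAt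
  have h2 := (hasFPowerSeriesOnBall_cuspFunction one_pos h.ana
    (fun τ => UpperHalfPlane.hasSum_qExpansion one_pos h.per h.md h.bdd τ)).hasFPowerSeriesAt
  simpa using congr_arg (FormalMultilinearSeries.coeff · m) (h1.eq_formalMultilinearSeries h2)

lemma HasQ.add {f g c d} (h : HasQ f c) (k : HasQ g d) : HasQ (f + g) (c + d) :=
  ⟨h.md.add k.md, fun τ => by simpa [add_mul] using (h.sum τ).add (k.sum τ)⟩

lemma HasQ.smul {f c} (r : ℂ) (h : HasQ f c) : HasQ (r • f) (r • c) :=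
  ⟨h.md.const_smul r, fun τ => by simpa [mul_assoc] using (h.sum τ).mul_left r⟩

lemma HasQ.sub {f g c d} (h : HasQ f c) (k : HasQ g d) : HasQ (f - g) (c - d) := by
  simpa [sub_eq_add_neg] using h.add (k.smul (-1))

lemma HasQ.mul {f g c d} (h : HasQ f c) (k : HasQ g d) : HasQ (f * g) (c * d) := by
  refine ⟨h.md.mul k.md, fun τ => ?_⟩
  have s1 := (h.sum τ).summable.norm
  have s2 := (k.sum τ).summable.norm
  have := (summable_norm_sum_mul_antidiagonal_of_summable_norm s1 s2).of_norm.hasSum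
  rw [← tsum_mul_tsum_eq_tsum_sum_antidiagonal_of_summable_norm s1 s2, (h.sum τ).tsum_eq,
    (k.sum τ).tsum_eq] at this
  refine hasSum_cg (fun m => ?_) this
  rw [PowerSeries.coeff_mul, Finset.sum_smul]
  refine Finset.sum_congr rfl fun p hp => ?_
  rw [← Finset.HasAntidiagonal.mem_antidiagonal.mp hp, pow_add]
  simp only [smul_eq_mul]
  ring

def thC (c : PowerSeries ℂ) : PowerSeries ℂ := PowerSeries.mk fun n => n * PowerSeries.coeff n c

lemma thC_coeff (c : PowerSeries ℂ) (n : ℕ) :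
    PowerSeries.coeff n (thC c) = n * PowerSeries.coeff n c := by simp [thC]

lemma HasQ.der {f c} (h : HasQ f c) : HasQ (normalizedDerivOfComplex f) (thC c) := by
  refine ⟨normalizedDerivOfComplex_mdifferentiable h.md, fun τ => ?_⟩
  set G := cuspFunction 1 f
  have hG : DifferentiableOn ℂ G (Metric.ball 0 1) :=
    differentiableOn_cuspFunction_ball one_pos h.per h.md h.bdd
  have hq : Function.Periodic.qParam 1 τ ∈ Metric.ball (0:ℂ) 1 := by
    simpa using Function.Periodic.norm_qParam_lt_one one_pos τ.im_pos
  have hG' := hG.deriv Metric.isOpen_ball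
  have hs := Complex.hasSum_taylorSeries_on_ball (c := 0) (r := 1) (by simpa using hG')
    (z := Function.Periodic.qParam 1 τ) (by simpa using hq)
  have hfG : f ∘ ofComplex =ᶠ[𝓝 (τ : ℂ)] fun w => G (Function.Periodic.qParam 1 w) := by
    filter_upwards [isOpen_upperHalfPlaneSet.mem_nhds τ.im_pos] with w hw
    have := eq_cuspFunction (h := 1) ⟨w, hw⟩ one_ne_zero h.per
    simp only [Function.comp_apply, ofComplex_apply_of_im_pos hw]
    exact this.symm
  have hdq : HasDerivAt (fun w : ℂ => Function.Periodic.qParam 1 w) (2 * Real.pi * I * Function.Periodic.qParam 1 τ) τ := by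
    have := ((hasDerivAt_id (τ:ℂ)).const_mul (2 * Real.pi * I)).cexp
    simpa [Function.Periodic.qParam, mul_comm] using this
  have hd : deriv (f ∘ ofComplex) τ = deriv G (Function.Periodic.qParam 1 τ) * (2 * Real.pi * I * Function.Periodic.qParam 1 τ) := by
    rw [hfG.deriv_eq]
    have h1 : HasDerivAt G (deriv G (Function.Periodic.qParam 1 τ)) (Function.Periodic.qParam 1 τ) :=
      (hG.differentiableAt (Metric.isOpen_ball.mem_nhds hq)).hasDerivAt
    exact (h1.comp (τ:ℂ) hdq).deriv
  have hD : normalizedDerivOfComplex f τ = Function.Periodic.qParam 1 τ * deriv G (Function.Periodic.qParam 1 τ) := by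
    rw [normalizedDerivOfComplex, hd]
    have : (2 * Real.pi * I : ℂ) ≠ 0 := Complex.two_pi_I_ne_zero
    field_simp
  rw [hD, ← hasSum_nat_add_iff' 1]
  have := hs.mul_left (Function.Periodic.qParam 1 τ)
  simp only [Finset.range_one, Finset.sum_singleton]
  have e0 : PowerSeries.coeff 0 (thC c) = 0 := by simp [thC]
  rw [e0, zero_smul, sub_zero]
  refine hasSum_cg (fun m => ?_) this
  rw [thC_coeff, h.coeff_eq, qExpansion_coeff, iteratedDeriv_succ',
    Nat.factorial_succ]
  have : (m.factorial : ℂ) ≠ 0 := mod_cast m.factorial_ne_zero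
  have : ((m : ℂ) + 1) ≠ 0 := mod_cast m.succ_ne_zero
  push_cast
  simp only [smul_eq_mul, sub_zero]
  field_simp
  ring

lemma HasQ.zero_of_slash {f c} (h : HasQ f c) (k : ℕ) (hk : k < 12)
    (hs : ∀ γ : SL(2, ℤ), f ∣[(k:ℤ)] γ = f) (h0 : PowerSeries.coeff 0 c = 0) : c = 0 := by
  let F : ModularForm 𝒮ℒ (k:ℤ) :=
    { toFun := f
      slash_action_eq' := by
        rintro _ ⟨γ, rfl⟩
        exact hs γ
      holo' := h.md
      bdd_at_cusps' := by
        intro c hc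
        rw [Subgroup.IsArithmetic.isCusp_iff_isCusp_SL2Z] at hc
        rw [OnePoint.isBoundedAt_iff_forall_SL2Z hc]
        intro γ hγ
        rw [hs γ]
        exact h.bdd }
  have hF : F = 0 := by
    apply sturm_bound_levelOne_nat
    rw [Nat.div_eq_of_lt hk]
    have : PowerSeries.coeff 0 (qExpansion 1 F) = 0 := by
      rw [← h0, h.coeff_eq]; rfl
    simp only [Nat.cast_zero]
    rw [pos_iff_ne_zero]
    rw [PowerSeries.order_ne_zero_iff_constCoeff_eq_zero]
    simpa using this
  have hf : f = 0 := by
    have : (F : ℍ → ℂ) = 0 := by rw [hF]; rfl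
    exact this
  ext m
  rw [h.coeff_eq, hf, qExpansion_zero]

def cE2 : PowerSeries ℂ :=
  PowerSeries.mk fun m => if m = 0 then 1 else -24 * (ArithmeticFunction.sigma 1 m : ℂ)
def cE4 : PowerSeries ℂ :=
  PowerSeries.mk fun m => if m = 0 then 1 else 240 * (ArithmeticFunction.sigma 3 m : ℂ)
def cE6 : PowerSeries ℂ :=
  PowerSeries.mk fun m => if m = 0 then 1 else -504 * (ArithmeticFunction.sigma 5 m : ℂ)

lemma hasQ_E2 : HasQ EisensteinSeries.E2 cE2 := by
  refine ⟨E2_mdifferentiable, fun τ => ?_⟩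
  simpa only [cE2, PowerSeries.coeff_mk, Function.Periodic.qParam, ofReal_one, div_one] using
    EisensteinSeries.hasSum_qExpansion_E2 (z := τ)

lemma bern4 : bernoulli 4 = -1/30 := by decide +kernel
lemma bern6 : bernoulli 6 = 1/42 := by decide +kernel

lemma hasQ_E4 : HasQ E₄ cE4 := by
  refine ⟨E₄.holo', fun τ => ?_⟩
  have := ModularForm.hasSum_qExpansion E₄ one_pos one_mem_strictPeriods_SL τ
  have e : qExpansion 1 E₄ = cE4 := by
    ext m
    have := EisensteinSeries.E_qExpansion_coeff (k := 4) (by norm_num) (by decide) m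
    rw [cE4, PowerSeries.coeff_mk]
    refine this.trans ?_
    rw [bern4]; norm_num
  rw [e] at this
  simpa using this

lemma hasQ_E6 : HasQ E₆ cE6 := by
  refine ⟨E₆.holo', fun τ => ?_⟩
  have := ModularForm.hasSum_qExpansion E₆ one_pos one_mem_strictPeriods_SL τ
  have e : qExpansion 1 E₆ = cE6 := by
    ext m
    have := EisensteinSeries.E_qExpansion_coeff (k := 6) (by norm_num) (by decide) m
    rw [cE6, PowerSeries.coeff_mk]
    refine this.trans ?_
    rw [bern6]; norm_num
  rw [e] at this
  simpa using this

lemma E4_slash (γ : SL(2, ℤ)) : (E₄ : ℍ → ℂ) ∣[((4:ℕ):ℤ)] γ = E₄ :=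
  E₄.slash_action_eq' _ ⟨γ, rfl⟩
lemma E6_slash (γ : SL(2, ℤ)) : (E₆ : ℍ → ℂ) ∣[((6:ℕ):ℤ)] γ = E₆ :=
  E₆.slash_action_eq' _ ⟨γ, rfl⟩

lemma ram2C : (12:ℂ) • thC cE2 = cE2 * cE2 - cE4 := by
  have h := ((hasQ_E2.der.smul 12).sub (hasQ_E2.mul hasQ_E2)).add hasQ_E4
  have := h.zero_of_slash 4 (by norm_num) ?_ ?_
  · linear_combination this
  · intro γ
    rw [SlashAction.add_slash, E4_slash γ, sub_eq_add_neg, SlashAction.add_slash, SlashAction.neg_slash,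
      ← sub_eq_add_neg, ← sub_eq_add_neg]
    congr 1
    ext z
    have h1 := congrFun (normalizedDerivOfComplex_SL_slash (k := 2) (γ := γ) E2_mdifferentiable) z
    have h2 := EisensteinSeries.E2_slash_action γ
    have h3 : normalizedDerivOfComplex (EisensteinSeries.D2 γ) z =
        - (γ 1 0 / denom γ z) ^ 2 := by
      have hd := hasDerivAt_denom_zpow (γ : GL (Fin 2) ℝ) (-1) z
      have hd2 := (hd.const_mul (2 * Real.pi * I * γ 1 0))
      have he : (EisensteinSeries.D2 γ) ∘ ofComplex =ᶠ[𝓝 (z : ℂ)]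
          fun w => (2 * Real.pi * I * γ 1 0) * denom (γ : GL (Fin 2) ℝ) w ^ (-1 : ℤ) := by
        filter_upwards [isOpen_upperHalfPlaneSet.mem_nhds z.im_pos] with w hw
        simp only [Function.comp_apply, ofComplex_apply_of_im_pos hw, EisensteinSeries.D2]
        rw [zpow_neg_one, div_eq_mul_inv]
      rw [normalizedDerivOfComplex, he.deriv_eq, hd2.deriv]
      have h0 : denom (γ : GL (Fin 2) ℝ) z ≠ 0 := denom_ne_zero _ z
      have : (2 * Real.pi * I : ℂ) ≠ 0 := Complex.two_pi_I_ne_zero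
      norm_num [zpow_neg, zpow_ofNat]
      field_simp
      rw [I_sq]; ring
    have hD2 : MDiff (EisensteinSeries.D2 γ) := by
      rw [UpperHalfPlane.mdifferentiable_iff]
      intro w hw
      have hd := hasDerivAt_denom_zpow (γ : GL (Fin 2) ℝ) (-1) ⟨w, hw⟩
      have hd2 := (hd.const_mul (2 * Real.pi * I * γ 1 0))
      have he : (EisensteinSeries.D2 γ) ∘ ofComplex =ᶠ[𝓝 w]
          fun w => (2 * Real.pi * I * γ 1 0) * denom (γ : GL (Fin 2) ℝ) w ^ (-1 : ℤ) := by
        filter_upwards [isOpen_upperHalfPlaneSet.mem_nhds hw] with w hw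
        simp only [Function.comp_apply, ofComplex_apply_of_im_pos hw, EisensteinSeries.D2]
        rw [zpow_neg_one, div_eq_mul_inv]
      exact (hd2.congr_of_eventuallyEq he).differentiableAt.differentiableWithinAt
    rw [h2, normalizedDerivOfComplex_sub _ _ E2_mdifferentiable (hD2.const_smul _),
      normalizedDerivOfComplex_smul _ _ hD2] at h1
    have h4 := congrFun (ModularForm.mul_slash_SL2 2 2 γ EisensteinSeries.E2 EisensteinSeries.E2) z
    rw [h2] at h4
    simp only [Pi.sub_apply, Pi.smul_apply, Pi.mul_apply, smul_eq_mul, h3, riemannZeta_two,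
      EisensteinSeries.D2] at h1 h4 ⊢
    have h5 : (((12:ℂ) • normalizedDerivOfComplex EisensteinSeries.E2) ∣[((4:ℕ):ℤ)] γ) z =
      12 * (normalizedDerivOfComplex EisensteinSeries.E2 ∣[((2:ℤ)+2)] γ) z := by
      rw [ModularForm.SL_smul_slash]; rfl
    rw [h5]
    have h6 : ((EisensteinSeries.E2 * EisensteinSeries.E2) ∣[((4:ℕ):ℤ)] γ) z = _ := h4
    rw [h6]
    have hpi : (Real.pi : ℂ) ≠ 0 := mod_cast Real.pi_ne_zero
    have h0 : denom (γ : GL (Fin 2) ℝ) z ≠ 0 := denom_ne_zero _ z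
    have hI : (2 * Real.pi * I : ℂ)⁻¹ = -I / (2 * Real.pi) := by
      rw [mul_inv, inv_I]; field_simp
    rw [hI] at h1
    rw [mul_div_assoc] at h1 ⊢
    generalize (((γ 1 0 : ℤ) : ℂ) / denom (γ : GL (Fin 2) ℝ) z) = w at *
    generalize (normalizedDerivOfComplex EisensteinSeries.E2 ∣[((2:ℤ)+2)] γ) z = X at *
    generalize EisensteinSeries.E2 z = Y at *
    generalize normalizedDerivOfComplex EisensteinSeries.E2 z = Z at *
    have h7 : X = Z + 3 / Real.pi ^ 2 * w ^ 2 + 2 * (-I / (2 * Real.pi)) * w *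
        (Y - 3 / Real.pi ^ 2 * (2 * Real.pi * I * w)) := by
      push_cast at h1
      field_simp at h1 ⊢
      linear_combination -h1 / 2
    rw [h7]
    field_simp
    ring_nf
    simp only [I_sq]
    ring
  · simp [thC, cE2, cE4]

lemma ram4C : (3:ℂ) • thC cE4 = cE2 * cE4 - cE6 := by
  have h := ((hasQ_E4.der.smul 3).sub (hasQ_E2.mul hasQ_E4)).add hasQ_E6
  have := h.zero_of_slash 6 (by norm_num) ?_ ?_
  · linear_combination this
  · intro γ
    rw [SlashAction.add_slash, E6_slash γ]
    congr 1
    have e : (3:ℂ) • normalizedDerivOfComplex E₄ - EisensteinSeries.E2 * E₄ =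
        (3:ℂ) • serreDerivative ((4:ℤ):ℂ) E₄ := by
      ext z; simp; ring
    rw [e, ModularForm.SL_smul_slash]
    congr 1
    exact serreDerivative_slash_invariant (k := 4) hasQ_E4.md (E4_slash γ)
  · simp [thC, cE2, cE4, cE6]

lemma ram6C : (2:ℂ) • thC cE6 = cE2 * cE6 - cE4 * cE4 := by
  have h := ((hasQ_E6.der.smul 2).sub (hasQ_E2.mul hasQ_E6)).add (hasQ_E4.mul hasQ_E4)
  have := h.zero_of_slash 8 (by norm_num) ?_ ?_
  · linear_combination this
  · intro γ
    have e1 : ((E₄ : ℍ → ℂ) * E₄) ∣[((8:ℕ):ℤ)] γ = (E₄ : ℍ → ℂ) * E₄ := by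
      have := ModularForm.mul_slash_SL2 4 4 γ (E₄ : ℍ → ℂ) E₄
      have h4 := E4_slash γ
      exact this.trans (congrArg₂ (· * ·) h4 h4)
    rw [SlashAction.add_slash, e1]
    congr 1
    have e : (2:ℂ) • normalizedDerivOfComplex E₆ - EisensteinSeries.E2 * E₆ =
        (2:ℂ) • serreDerivative ((6:ℤ):ℂ) E₆ := by
      ext z; simp; ring
    rw [e, ModularForm.SL_smul_slash]
    congr 1
    exact serreDerivative_slash_invariant (k := 6) hasQ_E6.md (E6_slash γ)
  · simp [thC, cE2, cE4, cE6]
end analytic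


section formal
open PowerSeries

/-- The operator `q d/dq`. -/
def th {R : Type*} [CommRing R] (f : PowerSeries R) : PowerSeries R := X * derivative R f

lemma th_coeff {R : Type*} [CommRing R] (f : PowerSeries R) (n : ℕ) :
    coeff n (th f) = n * coeff n f := by
  unfold th
  rcases n with _ | n
  · simp
  · rw [PowerSeries.coeff_succ_X_mul, PowerSeries.coeff_derivative]; push_cast; ring

lemma th_add {R : Type*} [CommRing R] (f g : PowerSeries R) : th (f + g) = th f + th g := by
  simp [th, mul_add]
lemma th_sub {R : Type*} [CommRing R] (f g : PowerSeries R) : th (f - g) = th f - th g := by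
  simp [th, mul_sub]
lemma th_neg {R : Type*} [CommRing R] (f : PowerSeries R) : th (-f) = -th f := by
  simp [th]
lemma th_mul {R : Type*} [CommRing R] (f g : PowerSeries R) :
    th (f * g) = th f * g + f * th g := by
  simp [th, Derivation.leibniz, smul_eq_mul]; ring
lemma th_natCast {R : Type*} [CommRing R] (n : ℕ) : th (n : PowerSeries R) = 0 := by
  simp [th]
lemma th_ofNat {R : Type*} [CommRing R] (n : ℕ) [n.AtLeastTwo] :
    th (ofNat(n) : PowerSeries R) = 0 := th_natCast n
lemma th_one {R : Type*} [CommRing R] : th (1 : PowerSeries R) = 0 := by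
  simp [th]
lemma th_zero {R : Type*} [CommRing R] : th (0 : PowerSeries R) = 0 := by
  simp [th]
lemma th_X {R : Type*} [CommRing R] : th (X : PowerSeries R) = X := by
  simp [th]
lemma th_pow {R : Type*} [CommRing R] (f : PowerSeries R) (n : ℕ) :
    th (f ^ (n + 1)) = (n + 1) * f ^ n * th f := by
  induction n with
  | zero => simp
  | succ n ih => rw [pow_succ, th_mul, ih]; push_cast; ring
lemma th_map {R S : Type*} [CommRing R] [CommRing S] (φ : R →+* S) (f : PowerSeries R) :
    th (map φ f) = map φ (th f) := by
  ext n; simp [th_coeff]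

/-- `∑ σ_k(n) q^n`. -/
def S (k : ℕ) : PowerSeries ℤ := mk fun n => (ArithmeticFunction.sigma k n : ℤ)
def eP : PowerSeries ℤ := 1 - 24 * S 1
def eQ : PowerSeries ℤ := 1 + 240 * S 3
def eR : PowerSeries ℤ := 1 - 504 * S 5

lemma coeff_ofNat_mul {R : Type*} [CommRing R] (k : ℕ) [k.AtLeastTwo] (f : PowerSeries R) (n : ℕ) :
    coeff n ((ofNat(k) : PowerSeries R) * f) = (ofNat(k) : R) * coeff n f := by
  have : (ofNat(k) : PowerSeries R) = C (ofNat(k) : R) := by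
    rw [map_ofNat]
  rw [this, coeff_C_mul]

lemma map_eP : map (Int.castRingHom ℂ) eP = cE2 := by
  ext n
  rw [coeff_map, eP, cE2, coeff_mk, map_sub, coeff_ofNat_mul, coeff_one, S, coeff_mk]
  split_ifs with h <;> simp [h]
lemma map_eQ : map (Int.castRingHom ℂ) eQ = cE4 := by
  ext n
  rw [coeff_map, eQ, cE4, coeff_mk, map_add, coeff_ofNat_mul, coeff_one, S, coeff_mk]
  split_ifs with h <;> simp [h]
lemma map_eR : map (Int.castRingHom ℂ) eR = cE6 := by
  ext n
  rw [coeff_map, eR, cE6, coeff_mk, map_sub, coeff_ofNat_mul, coeff_one, S, coeff_mk]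
  split_ifs with h <;> simp [h]
lemma thC_eq (c : PowerSeries ℂ) : thC c = th c := by
  ext n; rw [thC_coeff, th_coeff]
lemma mapC_inj : Function.Injective (map (Int.castRingHom ℂ)) :=
  PowerSeries.map_injective _ (RingHom.injective_int _)

lemma smul_ofNat {R : Type*} [CommRing R] (k : ℕ) [k.AtLeastTwo] (f : PowerSeries R) :
    (OfNat.ofNat k : R) • f = (OfNat.ofNat k : PowerSeries R) * f := by
  ext n; rw [coeff_ofNat_mul]; simp

lemma ram2 : 12 * th eP = eP * eP - eQ := by
  apply mapC_inj
  have := ram2C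
  rw [smul_ofNat, thC_eq, ← map_eP, ← map_eQ, th_map] at this
  rw [map_mul, map_ofNat (map (Int.castRingHom ℂ)) 12]; simpa only [map_mul, map_sub] using this
lemma ram4 : 3 * th eQ = eP * eQ - eR := by
  apply mapC_inj
  have := ram4C
  rw [smul_ofNat, thC_eq, ← map_eP, ← map_eQ, ← map_eR, th_map] at this
  rw [map_mul, map_ofNat (map (Int.castRingHom ℂ)) 3]; simpa only [map_mul, map_sub] using this
lemma ram6 : 2 * th eR = eP * eR - eQ * eQ := by
  apply mapC_inj
  have := ram6C
  rw [smul_ofNat, thC_eq, ← map_eP, ← map_eQ, ← map_eR, th_map] at this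
  rw [map_mul, map_ofNat (map (Int.castRingHom ℂ)) 2]; simpa only [map_mul, map_sub] using this
end formal


section level2
open PowerSeries

/-- The substitution `q ↦ q^p`. -/
def ex {R : Type*} [CommRing R] (p : ℕ) [NeZero p] : PowerSeries R →+* PowerSeries R :=
  (expand p (NeZero.ne p)).toRingHom

lemma ex_coeff {R : Type*} [CommRing R] (p : ℕ) [NeZero p] (f : PowerSeries R) (n : ℕ) :
    coeff n (ex p f) = if p ∣ n then coeff (n / p) f else 0 :=
  PowerSeries.coeff_expand p (NeZero.ne p) f

lemma ex_coeff_mul {R : Type*} [CommRing R] (p : ℕ) [NeZero p] (f : PowerSeries R) (n : ℕ) :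
    coeff (p * n) (ex p f) = coeff n f := PowerSeries.coeff_expand_mul p (NeZero.ne p) f n

lemma ex_X {R : Type*} [CommRing R] (p : ℕ) [NeZero p] : ex p (X : PowerSeries R) = X ^ p :=
  PowerSeries.expand_X p (NeZero.ne p)

lemma ex_map {R S : Type*} [CommRing R] [CommRing S] (p : ℕ) [NeZero p] (φ : R →+* S)
    (f : PowerSeries R) : map φ (ex p f) = ex p (map φ f) :=
  PowerSeries.map_expand p (NeZero.ne p) φ f

lemma ex_ex {R : Type*} [CommRing R] (p q : ℕ) [NeZero p] [NeZero q] (f : PowerSeries R) :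
    ex p (ex q f) = ex (p * q) f :=
  (PowerSeries.expand_mul p (NeZero.ne p) q (NeZero.ne q) f).symm

lemma th_ex {R : Type*} [CommRing R] (p : ℕ) [NeZero p] (f : PowerSeries R) :
    th (ex p f) = p * ex p (th f) := by
  ext n
  rw [th_coeff, ← map_natCast (C (R := R)) p, coeff_C_mul, ex_coeff, ex_coeff, th_coeff]
  split_ifs with h
  · obtain ⟨k, rfl⟩ := h
    rw [Nat.mul_div_cancel_left _ (Nat.pos_of_ne_zero (NeZero.ne p))]
    push_cast; ring
  · simp

lemma coeff_mul_low {R : Type*} [CommRing R] (f g : PowerSeries R) (n : ℕ)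
    (h : ∀ l < n, coeff l f = 0) : coeff n (g * f) = coeff 0 g * coeff n f := by
  rw [coeff_mul, Finset.sum_eq_single (0, n)]
  · rintro ⟨i, j⟩ hij hne
    have hij := Finset.HasAntidiagonal.mem_antidiagonal.mp hij
    have : j < n := by
      rcases Nat.eq_zero_or_pos i with rfl | hi
      · exfalso; apply hne; simp at hij; simp [hij]
      · simp at hij; omega
    simp [h j this]
  · intro h; simp at h

lemma c0_mul {R : Type*} [CommRing R] (f g : PowerSeries R) :
    coeff 0 (f * g) = coeff 0 f * coeff 0 g := by simp
lemma c1_mul {R : Type*} [CommRing R] (f g : PowerSeries R) :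
    coeff 1 (f * g) = coeff 0 f * coeff 1 g + coeff 1 f * coeff 0 g := by
  rw [coeff_mul]; simp [Finset.Nat.antidiagonal_succ]
lemma c2_mul {R : Type*} [CommRing R] (f g : PowerSeries R) :
    coeff 2 (f * g) = coeff 0 f * coeff 2 g + coeff 1 f * coeff 1 g + coeff 2 f * coeff 0 g := by
  rw [coeff_mul]; simp [Finset.Nat.antidiagonal_succ, add_assoc]

lemma c0_ofNat {R : Type*} [CommRing R] (k : ℕ) [k.AtLeastTwo] :
    coeff 0 (ofNat(k) : PowerSeries R) = (ofNat(k) : R) := by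
  have := coeff_ofNat_mul (R := R) k 1 0
  simpa using this

lemma S_c0 (k : ℕ) : coeff 0 (S k) = 0 := by simp [S]
lemma S_c1 (k : ℕ) : coeff 1 (S k) = 1 := by simp [S]
lemma S_c2 (k : ℕ) : coeff 2 (S k) = 1 + 2 ^ k := by
  simp [S, ArithmeticFunction.sigma_apply, Nat.Prime.divisors Nat.prime_two]

def P2 : PowerSeries ℤ := ex 2 eP
def Q2 : PowerSeries ℤ := ex 2 eQ
def R2 : PowerSeries ℤ := ex 2 eR
def ea : PowerSeries ℤ := 2 * P2 - eP
def ed : PowerSeries ℤ := S 3 - ex 2 (S 3)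

lemma ram2' : 6 * th P2 = P2 * P2 - Q2 := by
  have := congrArg (ex 2) ram2
  rw [map_sub, map_mul, map_mul, map_ofNat] at this
  rw [P2, Q2, th_ex]; push_cast; linear_combination this
lemma ram4' : 3 * th Q2 = 2 * (P2 * Q2 - R2) := by
  have := congrArg (ex 2) ram4
  rw [map_sub, map_mul, map_mul, map_ofNat] at this
  rw [P2, Q2, R2, th_ex]; push_cast; linear_combination 2 * this
lemma ram6' : th R2 = P2 * R2 - Q2 * Q2 := by
  have := congrArg (ex 2) ram6
  rw [map_sub, map_mul, map_mul, map_mul, map_ofNat (ex 2) 2] at this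
  rw [P2, Q2, R2, th_ex]; push_cast; linear_combination this

lemma Q1_sub_Q2 : eQ - Q2 = 240 * ed := by
  rw [Q2, eQ, ed, map_add, map_one, map_mul, map_ofNat (ex 2) 240]; ring

lemma lin3 (n x y z : ℤ) (h1 : 30 * n * x = 33 * x - 2 * y - 8 * z)
    (h2 : 20 * n * y = -21 * x - 6 * y + 16 * z) (h3 : 10 * n * z = -27 * x - 2 * y + 12 * z)
    (h0 : n ≠ 0) (hn : n ≠ 2) : x = 0 ∧ y = 0 ∧ z = 0 := by
  have hd : n ^ 2 * (n - 2) ≠ 0 := mul_ne_zero (pow_ne_zero _ h0) (sub_ne_zero.mpr hn)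
  refine ⟨?_, ?_, ?_⟩
  · have : 600 * (n ^ 2 * (n - 2)) * x = 0 := by linear_combination (20*n^2-18*n-4)*h1 - 2*(n-2)*h2 + (-16*n-8)*h3
    simpa [h0, sub_ne_zero.mpr hn] using this
  · have : 600 * (n ^ 2 * (n - 2)) * y = 0 := by linear_combination -(21*n+18)*h1 + (30*n^2-69*n+18)*h2 + (48*n-36)*h3
    simpa [h0, sub_ne_zero.mpr hn] using this
  · have : 600 * (n ^ 2 * (n - 2)) * z = 0 := by linear_combination (-54*n-12)*h1 + (-6*n+12)*h2 + (60*n^2-48*n-24)*h3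
    simpa [h0, sub_ne_zero.mpr hn] using this

lemma lev2 : eQ + 4 * Q2 - 5 * ea ^ 2 = 0 ∧
    5 * eR - 5 * ea ^ 3 + 12 * ea * (eQ - Q2) = 0 ∧
    10 * R2 - 10 * ea ^ 3 + 3 * ea * (eQ - Q2) = 0 := by
  set x := eQ + 4 * Q2 - 5 * ea ^ 2 with hx
  set y := 5 * eR - 5 * ea ^ 3 + 12 * ea * (eQ - Q2) with hy
  set z := 10 * R2 - 10 * ea ^ 3 + 3 * ea * (eQ - Q2) with hz
  have r1 := ram2
  have r2 := ram4
  have r3 := ram6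
  have r4 := ram2'
  have r5 := ram4'
  have r6 := ram6'
  have ta : th ea = 2 * th P2 - th eP := by
    rw [ea, th_sub, th_mul, th_ofNat]; ring
  have t1 : 30 * th x = (10 * eP + 23 * ea) * x - 2 * y - 8 * z := by
    simp only [hx, hy, hz, th_add, th_sub, th_mul, th_ofNat, pow_succ, pow_zero, one_mul, ta]
    simp only [ea]
    linear_combination (10 : PowerSeries ℤ) * r2 + 40 * r5 - 100 * (2 * P2 - eP) * r4
      + 25 * (2 * P2 - eP) * r1
  have t2 : 20 * th y = (-28 * (eQ - Q2) - 21 * ea ^ 2 - 2 * x) * x + (10 * eP - 16 * ea) * y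
      + 16 * ea * z := by
    simp only [hx, hy, hz, th_add, th_sub, th_mul, th_ofNat, pow_succ, pow_zero, one_mul, ta]
    simp only [ea]
    linear_combination (50 : PowerSeries ℤ) * r3
      + (80 * (eQ - Q2) - 100 * (2 * P2 - eP) ^ 2) * r4
      + (25 * (2 * P2 - eP) ^ 2 - 20 * (eQ - Q2)) * r1 + 80 * (2 * P2 - eP) * (r2 - r5)
  have t3 : 20 * th z = (13 * (eQ - Q2) - 54 * ea ^ 2 - 8 * x) * x - 4 * ea * y
      + (10 * eP + 14 * ea) * z := by
    simp only [hx, hy, hz, th_add, th_sub, th_mul, th_ofNat, pow_succ, pow_zero, one_mul, ta]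
    simp only [ea]
    linear_combination (200 : PowerSeries ℤ) * r6
      + (20 * (eQ - Q2) - 200 * (2 * P2 - eP) ^ 2) * r4
      + (50 * (2 * P2 - eP) ^ 2 - 5 * (eQ - Q2)) * r1 + 20 * (2 * P2 - eP) * (r2 - r5)
  have p0 : coeff 0 eP = 1 := by rw [eP, map_sub, coeff_ofNat_mul, S_c0]; simp
  have p1 : coeff 1 eP = -24 := by rw [eP, map_sub, coeff_ofNat_mul, S_c1]; simp [coeff_one]
  have p2 : coeff 2 eP = -72 := by rw [eP, map_sub, coeff_ofNat_mul, S_c2]; simp [coeff_one]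
  have q0 : coeff 0 eQ = 1 := by rw [eQ, map_add, coeff_ofNat_mul, S_c0]; simp
  have q1 : coeff 1 eQ = 240 := by rw [eQ, map_add, coeff_ofNat_mul, S_c1]; simp [coeff_one]
  have q2 : coeff 2 eQ = 2160 := by rw [eQ, map_add, coeff_ofNat_mul, S_c2]; simp [coeff_one]
  have s0 : coeff 0 eR = 1 := by rw [eR, map_sub, coeff_ofNat_mul, S_c0]; simp
  have s1 : coeff 1 eR = -504 := by rw [eR, map_sub, coeff_ofNat_mul, S_c1]; simp [coeff_one]
  have s2 : coeff 2 eR = -16632 := by rw [eR, map_sub, coeff_ofNat_mul, S_c2]; simp [coeff_one]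
  have P20 : coeff 0 P2 = 1 := by rw [P2, ex_coeff]; simpa using p0
  have P21 : coeff 1 P2 = 0 := by rw [P2, ex_coeff]; simp
  have P22 : coeff 2 P2 = -24 := by rw [P2, ex_coeff]; simpa using p1
  have Q20 : coeff 0 Q2 = 1 := by rw [Q2, ex_coeff]; simpa using q0
  have Q21 : coeff 1 Q2 = 0 := by rw [Q2, ex_coeff]; simp
  have Q22 : coeff 2 Q2 = 240 := by rw [Q2, ex_coeff]; simpa using q1
  have R20 : coeff 0 R2 = 1 := by rw [R2, ex_coeff]; simpa using s0
  have R21 : coeff 1 R2 = 0 := by rw [R2, ex_coeff]; simp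
  have R22 : coeff 2 R2 = -504 := by rw [R2, ex_coeff]; simpa using s1
  have a0 : coeff 0 ea = 1 := by rw [ea, map_sub, coeff_ofNat_mul, P20, p0]; norm_num
  have a1 : coeff 1 ea = 24 := by rw [ea, map_sub, coeff_ofNat_mul, P21, p1]; norm_num
  have a2 : coeff 2 ea = 24 := by rw [ea, map_sub, coeff_ofNat_mul, P22, p2]; norm_num
  have key : ∀ n : ℕ, coeff n x = 0 ∧ coeff n y = 0 ∧ coeff n z = 0 := by
    intro n
    induction n using Nat.strong_induction_on with
    | _ n ih =>
    by_cases h0 : n = 0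
    · subst h0
      simp only [hx, hy, hz, map_sub, map_add, mul_assoc, coeff_ofNat_mul, c0_ofNat, pow_succ, pow_zero,
        one_mul, c0_mul, a0, q0, s0, Q20, R20]
      norm_num
    by_cases h2 : n = 2
    · subst h2
      simp only [hx, hy, hz, map_sub, map_add, mul_assoc, coeff_ofNat_mul, c0_ofNat, pow_succ, pow_zero,
        one_mul, c2_mul, c1_mul, c0_mul, a0, q0, s0, Q20, R20, a1, q1, s1, Q21, R21,
        a2, q2, s2, Q22, R22]
      norm_num
    have lx := fun g => coeff_mul_low x g n fun l hl => (ih l hl).1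
    have ly := fun g => coeff_mul_low y g n fun l hl => (ih l hl).2.1
    have lz := fun g => coeff_mul_low z g n fun l hl => (ih l hl).2.2
    have x0 : coeff 0 x = 0 := (ih 0 (by omega)).1
    have e1 := congrArg (coeff n) t1
    have e2 := congrArg (coeff n) t2
    have e3 := congrArg (coeff n) t3
    simp only [map_sub, map_add, map_mul, coeff_ofNat_mul, lx, ly, lz, th_coeff, c0_ofNat, a0, p0, q0, Q20,
      x0, pow_two, c0_mul, neg_mul, map_neg] at e1 e2 e3
    apply lin3 (n : ℤ) _ _ _ _ _ _ (by exact_mod_cast h0) (by exact_mod_cast h2)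
    · linarith
    · linarith
    · linarith
  exact ⟨PowerSeries.ext fun n => by simpa using (key n).1,
    PowerSeries.ext fun n => by simpa using (key n).2.1,
    PowerSeries.ext fun n => by simpa using (key n).2.2⟩

lemma P2_eq : 2 * P2 = eP + ea := by rw [ea]; ring
lemma ofNat_cancel (k : ℕ) [k.AtLeastTwo] {f g : PowerSeries ℤ}
    (h : (ofNat(k) : PowerSeries ℤ) * f = (ofNat(k) : PowerSeries ℤ) * g) : f = g := by
  ext n
  have := congrArg (coeff n) h
  rw [coeff_ofNat_mul, coeff_ofNat_mul] at this
  exact mul_left_cancel₀ (OfNat.ofNat_ne_zero k) this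
lemma Q1_eq : eQ = ea ^ 2 + 192 * ed :=
  ofNat_cancel 5 (by linear_combination lev2.1 + 4 * Q1_sub_Q2)
lemma Q2_eq : Q2 = ea ^ 2 - 48 * ed := by linear_combination Q1_eq - Q1_sub_Q2
lemma R1_eq : eR = ea ^ 3 - 576 * ea * ed :=
  ofNat_cancel 5 (by linear_combination lev2.2.1 - 12 * ea * Q1_sub_Q2)
lemma R2_eq : R2 = ea ^ 3 - 72 * ea * ed :=
  ofNat_cancel 10 (by linear_combination lev2.2.2 - 3 * ea * Q1_sub_Q2)
lemma th_eP : 12 * th eP = eP ^ 2 - ea ^ 2 - 192 * ed := by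
  linear_combination ram2 - Q1_eq
lemma th_ea : 6 * th ea = ea * (eP - ea) + 192 * ed := by
  have ta : th ea = 2 * th P2 - th eP := by
    rw [ea, th_sub, th_mul, th_ofNat]; ring
  apply ofNat_cancel 2
  linear_combination 12 * ta + 4 * ram2' - ram2 + (2 * P2 + eP + ea) * P2_eq + Q1_eq - 4 * Q2_eq
lemma th_ed : 3 * th ed = ed * (eP + 2 * ea) := by
  have t := congrArg th Q1_sub_Q2
  rw [th_sub, th_mul, th_ofNat] at t
  apply ofNat_cancel 240
  linear_combination -3 * t + ram4 - ram4' + eP * Q1_eq - R1_eq + 2 * R2_eq - 2 * P2 * Q2_eq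
    - (ea ^ 2 - 48 * ed) * P2_eq
end level2


section etapart
open PowerSeries

/-- finite products -/
def Jt (R : Type*) [CommRing R] (b N : ℕ) : PowerSeries R :=
  ∏ k ∈ Finset.range N, (1 - (X : PowerSeries R) ^ (b * (k + 1)))

lemma Jt_succ (R : Type*) [CommRing R] (b N : ℕ) :
    Jt R b (N + 1) = Jt R b N * (1 - (X : PowerSeries R) ^ (b * (N + 1))) := by
  rw [Jt, Finset.prod_range_succ, Jt]

lemma Jt_stable (b : ℕ) (hb : b ≠ 0) (n m : ℕ) :
    coeff n (Jt ℤ b (n + 1 + m)) = coeff n (Jt ℤ b (n + 1)) := by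
  induction m with
  | zero => rfl
  | succ m ih =>
    rw [← add_assoc, Jt_succ, mul_sub, mul_one, map_sub, ih, coeff_mul_X_pow', if_neg, sub_zero]
    have : 1 * (n + 1 + m + 1) ≤ b * (n + 1 + m + 1) :=
      Nat.mul_le_mul_right _ (Nat.one_le_iff_ne_zero.mpr hb)
    omega

lemma J_dvd (b : ℕ) (hb : b ≠ 0) (N : ℕ) : (X : PowerSeries ℤ) ^ N ∣ J b - Jt ℤ b N := by
  rw [X_pow_dvd_iff]
  intro m hm
  obtain ⟨k, rfl⟩ := Nat.exists_eq_add_of_lt hm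
  have := Jt_stable b hb m k
  rw [show m + k + 1 = m + 1 + k by ring, map_sub, this, J, coeff_mk]
  exact sub_self _

lemma eq_of_X_pow_dvd {R : Type*} [CommRing R] {f g : PowerSeries R}
    (h : ∀ N, (X : PowerSeries R) ^ N ∣ f - g) : f = g := by
  ext n
  have := (X_pow_dvd_iff.mp (h (n + 1))) n (Nat.lt_succ_self n)
  rw [map_sub] at this
  exact sub_eq_zero.mp this

lemma dvd_th {R : Type*} [CommRing R] {f : PowerSeries R} {N : ℕ} (h : X ^ N ∣ f) :
    X ^ N ∣ th f := by
  rw [X_pow_dvd_iff] at h ⊢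
  intro m hm
  rw [th_coeff, h m hm, mul_zero]

lemma J_c0 (b : ℕ) : coeff 0 (J b) = 1 - if b = 0 then 1 else 0 := by
  rw [J, coeff_mk]
  simp only [zero_add, Finset.prod_range_one, mul_one, map_sub, coeff_X_pow, eq_comm (a := 0)]
  simp

lemma J_ex (b : ℕ) [NeZero b] : J b = ex b (J 1) := by
  ext n
  rw [ex_coeff]
  have h1 : Jt ℤ b (n + 1) = ex b (Jt ℤ 1 (n + 1)) := by
    rw [Jt, Jt, map_prod]
    refine Finset.prod_congr rfl fun k _ => ?_
    rw [map_sub, map_one, map_pow, ex_X, ← pow_mul, one_mul]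
  have h2 : coeff n (J b) = coeff n (Jt ℤ b (n + 1)) := by rw [J, coeff_mk]; rfl
  rw [h2, h1, ex_coeff]
  split_ifs with h
  · have h3 : coeff (n / b) (J 1) = coeff (n / b) (Jt ℤ 1 (n / b + 1)) := by
      rw [J, coeff_mk]; rfl
    rw [h3]
    have := Jt_stable 1 one_ne_zero (n / b) (n - n / b)
    rw [← this]
    congr 2
    have := Nat.div_le_self n b
    omega
  · rfl

/-- `∑_j (j-th term of w) q^{kj}` -/
def lam (R : Type*) [CommRing R] (w : ℕ → ℕ → ℕ) (k : ℕ) : PowerSeries R :=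
  mk fun n => if k ∣ n ∧ n ≠ 0 then (w k (n / k) : R) else 0

lemma lam_sum (w : ℕ → ℕ → ℕ) (s : ℕ → ℕ) (hs : ∀ n, s n = ∑ k ∈ n.divisors, w k (n / k))
    {R : Type*} [CommRing R] (N : ℕ) :
    (X : PowerSeries R) ^ N ∣ (mk fun n => (s n : R)) - ∑ k ∈ Finset.range N, lam R w (k + 1) := by
  rw [X_pow_dvd_iff]
  intro m hm
  rw [map_sub, coeff_mk, map_sum, hs, sub_eq_zero]
  rcases Nat.eq_zero_or_pos m with rfl | hm0
  · simp [lam]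
  push_cast
  simp only [lam, coeff_mk]
  rw [Finset.sum_ite, Finset.sum_const_zero, add_zero]
  symm
  refine Finset.sum_bij (fun k _ => k + 1) ?_ ?_ ?_ ?_
  · intro k hk
    simp only [Finset.mem_filter] at hk
    exact Nat.mem_divisors.mpr hk.2
  · intro a _ b _ h; simpa using h
  · intro b hb
    have hb' := Nat.mem_divisors.mp hb
    have h0 := Nat.pos_of_mem_divisors hb
    have hle := Nat.le_of_dvd hm0 hb'.1
    refine ⟨b - 1, ?_, by omega⟩
    simp only [Finset.mem_filter, Finset.mem_range]
    refine ⟨by omega, ?_⟩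
    rw [Nat.sub_add_cancel h0]; exact hb'
  · intro k _; rfl

lemma lam1 (k : ℕ) (hk : k ≠ 0) :
    (1 - (X : PowerSeries ℤ) ^ k) * lam ℤ (fun k _ => k) k = (k : PowerSeries ℤ) * X ^ k := by
  ext n
  rw [sub_mul, one_mul, map_sub, coeff_X_pow_mul', ← map_natCast (C (R := ℤ)) k, coeff_C_mul,
    coeff_X_pow]
  simp only [lam, coeff_mk]
  rcases lt_trichotomy n k with h | h | h
  · rw [if_neg (by omega : ¬ k ≤ n), if_neg h.ne, if_neg]; · simp
    rintro ⟨h1, h2⟩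
    exact absurd (Nat.le_of_dvd (Nat.pos_of_ne_zero h2) h1) (by omega)
  · subst h; simp [hk]
  · rw [if_pos h.le, if_neg h.ne']
    have : k ∣ n ↔ k ∣ n - k := by
      rw [Nat.dvd_sub_iff_left h.le (dvd_refl k)]
    have h2 : n ≠ 0 := by omega
    have h3 : n - k ≠ 0 := by omega
    simp only [← this, h2, h3, ne_eq, not_false_eq_true, and_true, sub_self, mul_zero]

lemma th_Jt (N : ℕ) : th (Jt ℤ 1 N) =
    - (Jt ℤ 1 N * ∑ k ∈ Finset.range N, lam ℤ (fun k _ => k) (k + 1)) := by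
  induction N with
  | zero => simp [Jt, th_one]
  | succ N ih =>
    have h := lam1 (N + 1) (Nat.succ_ne_zero N)
    rw [Jt_succ, th_mul, ih, Finset.sum_range_succ, th_sub, th_one, one_mul, th_pow, th_X]
    push_cast at h ⊢
    linear_combination Jt ℤ 1 N * h

lemma sig_sum (k n : ℕ) : ArithmeticFunction.sigma k n = ∑ d ∈ n.divisors, (n / d) ^ k := by
  rw [ArithmeticFunction.sigma_apply]
  exact (Nat.sum_div_divisors n (fun d => d ^ k)).symm

lemma th_J1 : th (J 1) = - (S 1 * J 1) := by
  apply eq_of_X_pow_dvd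
  intro N
  have h1 := J_dvd 1 one_ne_zero N
  have h2 := dvd_th h1
  rw [th_sub, th_Jt] at h2
  have h3 := lam_sum (R := ℤ) (fun k _ => k) (ArithmeticFunction.sigma 1)
    (fun n => by simp [ArithmeticFunction.sigma_apply]) N
  have h4 : S 1 = mk fun n => ((ArithmeticFunction.sigma 1 n : ℕ) : ℤ) := rfl
  rw [← h4] at h3
  have := (h2.add (h1.mul_left (S 1))).add (h3.mul_left (Jt ℤ 1 N))
  convert this using 1
  ring

lemma th_Jb (b : ℕ) [NeZero b] : th (J b) = - (b * ex b (S 1) * J b) := by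
  rw [J_ex, th_ex, th_J1, map_neg, map_mul]; ring

lemma lam5_one (R : Type*) [CommRing R] : (1 - X) ^ 6 * lam R (fun _ j => j ^ 5) 1 =
    (X + 26 * X ^ 2 + 66 * X ^ 3 + 26 * X ^ 4 + X ^ 5 : PowerSeries R) := by
  obtain ⟨g, hg⟩ : ∃ g : PowerSeries R, g = mk fun _ => 1 := ⟨_, rfl⟩
  have h0 : (1 - X) * g = 1 := by
    rw [hg, mul_comm]; exact mk_one_mul_one_sub_eq_one R
  have hl : lam R (fun _ j => j ^ 5) 1 = th (th (th (th (th g)))) := by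
    ext n
    simp only [lam, th_coeff, hg, coeff_mk]
    rcases Nat.eq_zero_or_pos n with rfl | h
    · simp
    · simp [h.ne']; ring
  have step : ∀ (m : ℕ) (u p p' : PowerSeries R), (1 - X) ^ (m + 1) * u = p → th p = p' →
      (1 - X) ^ (m + 2) * th u = (1 - X) * p' + ((m : PowerSeries R) + 1) * X * p := by
    intro m u p p' h hp
    have := congrArg th h
    rw [th_mul, th_pow, th_sub, th_one, th_X, hp] at this
    linear_combination (1 - X) * this + (m + 1) * X * h
  have s1 := step 0 g _ _ (by simpa using h0) th_one
  have s2 := step 1 _ _ _ s1 rfl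
  have s3 := step 2 _ _ _ s2 rfl
  have s4 := step 3 _ _ _ s3 rfl
  have s5 := step 4 _ _ _ s4 rfl
  rw [hl, s5]
  simp only [th_add, th_sub, th_mul, th_X, th_one, th_zero, th_natCast, th_ofNat]
  push_cast
  ring

lemma lam5 (R : Type*) [CommRing R] (k : ℕ) (hk : k ≠ 0) (h49 : (49 : PowerSeries R) = 0) :
    (1 - X ^ k) ^ 7 =
      (1 - (X : PowerSeries R) ^ (7 * k)) * (1 - 7 * lam R (fun _ j => j ^ 5) k) := by
  haveI : NeZero k := ⟨hk⟩
  have hl : lam R (fun _ j => j ^ 5) k = ex k (lam R (fun _ j => j ^ 5) 1) := by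
    ext n
    rw [ex_coeff]
    simp only [lam, coeff_mk]
    split_ifs with h1 h2 h3 h4 h5
    · simp
    · rcases h1 with ⟨⟨c, rfl⟩, h⟩
      exfalso; apply h3
      rw [Nat.mul_div_cancel_left _ (Nat.pos_of_ne_zero hk)]
      exact ⟨one_dvd _, fun hc => h (by rw [hc, mul_zero])⟩
    · exact absurd h1.1 h2
    · simp only [not_and, not_not] at h1; simp [h1 h4] at h5
    · rfl
    · rfl
  have h := congrArg (ex k) (lam5_one R)
  rw [map_mul, ← hl, map_pow, map_sub, map_one, ex_X] at h
  simp only [map_add, map_mul, map_pow, ex_X, map_ofNat (ex (R := R) k)] at h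
  rw [pow_mul' (X : PowerSeries R) 7 k]
  set x := (X : PowerSeries R) ^ k
  set l := lam R (fun _ j => j ^ 5) k
  linear_combination 7 * (1 - x) * h + (l * ((1)*x^1 + (-3)*x^2 + (5)*x^3 + (-5)*x^4 + (3)*x^5 + (-1)*x^6) + (4)*x^2 + (5)*x^3 + (-5)*x^4 + (-4)*x^5) * h49

lemma e1J (N : ℕ) (R : Type*) [CommRing R] (h49 : (49 : PowerSeries R) = 0) : (Jt R 1 N) ^ 7 =
    Jt R 7 N * (1 - 7 * ∑ k ∈ Finset.range N, lam R (fun _ j => j ^ 5) (k + 1)) := by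
  induction N with
  | zero => simp [Jt]
  | succ N ih =>
    have h := lam5 R (N + 1) (Nat.succ_ne_zero N) h49
    rw [Jt_succ, Jt_succ, mul_pow, ih, Finset.sum_range_succ, one_mul, h]
    linear_combination (Jt R 7 N * (1 - X ^ (7 * (N + 1))) *
      (∑ k ∈ Finset.range N, lam R (fun _ j => j ^ 5) (k + 1)) *
        lam R (fun _ j => j ^ 5) (N + 1)) * h49

lemma Jt_map {R T : Type*} [CommRing R] [CommRing T] (φ : R →+* T) (b N : ℕ) :
    map φ (Jt R b N) = Jt T b N := by
  rw [Jt, map_prod, Jt]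
  refine Finset.prod_congr rfl fun k _ => ?_
  rw [map_sub, map_one, map_pow, map_X]

lemma J7_mod : map (Int.castRingHom (ZMod 49)) (J 1 ^ 7) =
    map (Int.castRingHom (ZMod 49)) (J 7 * (1 - 7 * S 5)) := by
  have h49 : (49 : PowerSeries (ZMod 49)) = 0 := by
    rw [← map_ofNat (C (R := ZMod 49)) 49, show ((OfNat.ofNat 49 : ZMod 49)) = 0 from rfl, map_zero]
  apply eq_of_X_pow_dvd
  intro N
  set φ := map (Int.castRingHom (ZMod 49)) with hφ
  have hX : φ X = X := map_X _
  have a1 := map_dvd φ (J_dvd 1 one_ne_zero N)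
  have a7 := map_dvd φ (J_dvd 7 (by norm_num) N)
  rw [map_pow, hX, map_sub, hφ, Jt_map, ← hφ] at a1 a7
  have h := e1J N (ZMod 49) h49
  have a5 := lam_sum (R := ZMod 49) (fun _ j => j ^ 5) (ArithmeticFunction.sigma 5)
    (fun n => sig_sum 5 n) N
  have h4 : φ (S 5) = mk fun n => ((ArithmeticFunction.sigma 5 n : ℕ) : ZMod 49) := by
    ext n; simp [hφ, S]
  rw [← h4] at a5
  have b1 := a1.trans (sub_dvd_pow_sub_pow _ _ 7)
  have hφ7 : φ 7 = 7 := map_ofNat φ 7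
  rw [map_pow, map_mul, map_sub, map_one, map_mul, hφ7]
  have := (b1.sub (a7.mul_right (1 - 7 * φ (S 5)))).add (a5.mul_left (7 * Jt (ZMod 49) 7 N))
  convert this using 1
  rw [h]
  ring

lemma ode_zero (v g : PowerSeries ℤ) (h : th v = g * v)
    (h0 : ∀ n : ℕ, (n : ℤ) = coeff 0 g → coeff n v = 0) : v = 0 := by
  ext n
  induction n using Nat.strong_induction_on with
  | _ n ih =>
    by_cases hn : (n : ℤ) = coeff 0 g
    · simpa using h0 n hn
    · have := congrArg (coeff n) h
      rw [coeff_mul_low v g n (fun l hl => by simpa using ih l hl), th_coeff] at this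
      have h2 : ((n : ℤ) - coeff 0 g) * coeff n v = 0 := by linear_combination this
      rw [map_zero]; exact (mul_eq_zero.mp h2).resolve_left (sub_ne_zero.mpr hn)

def s2 : PowerSeries ℤ := ex 2 (S 1)
lemma s2_c0 : coeff 0 s2 = 0 := by rw [s2, ex_coeff]; simp [S]
lemma eP_s : eP = 1 - 24 * S 1 := rfl
lemma ea_s : ea = 1 + 24 * S 1 - 48 * s2 := by
  rw [ea, P2, eP, map_sub, map_one, map_mul, map_ofNat (ex 2) 24, ← s2]; ring
lemma th_J2 : th (J 2) = - (2 * s2 * J 2) := by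
  have := th_Jb 2
  rw [← s2] at this; exact_mod_cast this

lemma ed_c0 : coeff 0 ed = 0 := by rw [ed, map_sub, ex_coeff]; simp [S]
lemma ed_c1 : coeff 1 ed = 1 := by rw [ed, map_sub, ex_coeff]; simp [S]
lemma ea_c0 : coeff 0 ea = 1 := by
  rw [ea_s, map_sub, map_add, coeff_ofNat_mul, coeff_ofNat_mul, s2_c0, S_c0]; simp
lemma c0_pow (f : PowerSeries ℤ) (n : ℕ) : coeff 0 (f ^ n) = coeff 0 f ^ n := by simp

lemma d_eta : ed * J 1 ^ 8 = X * J 2 ^ 16 := by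
  rw [← sub_eq_zero]
  apply ode_zero _ (1 - 32 * s2)
  · apply ofNat_cancel 3
    rw [th_sub, th_mul, th_mul, th_pow, th_pow, th_X, th_J1, th_J2]
    push_cast
    linear_combination J 1 ^ 8 * th_ed + ed * J 1 ^ 8 * (eP_s + 2 * ea_s)
  · intro n hn
    rw [map_sub, coeff_ofNat_mul, s2_c0] at hn
    have : n = 1 := by simpa using hn
    subst this
    rw [map_sub, c1_mul, c1_mul, ed_c0, ed_c1, c0_pow, c0_pow, J_c0, J_c0]
    simp

lemma c_eta : (ea ^ 2 - 64 * ed) * J 2 ^ 8 = J 1 ^ 16 := by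
  rw [← sub_eq_zero]
  apply ode_zero _ (-16 * S 1)
  · apply ofNat_cancel 3
    rw [th_sub, th_mul, th_sub, th_mul, th_ofNat, th_pow, th_pow, th_pow, th_J1, th_J2]
    push_cast
    linear_combination J 2 ^ 8 * (ea * th_ea - 64 * th_ed
      + (ea ^ 2 - 64 * ed) * (eP_s - ea_s))
  · intro n hn
    rw [neg_mul, map_neg, coeff_ofNat_mul, S_c0] at hn
    have : n = 0 := by simpa using hn
    subst this
    rw [map_sub, c0_mul, map_sub, coeff_ofNat_mul, c0_pow, c0_pow, c0_pow, ed_c0, ea_c0, J_c0, J_c0]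
    simp
end etapart


section modseven
open PowerSeries

/-- reduction mod 7 -/
def m7 : PowerSeries ℤ →+* PowerSeries (ZMod 7) := map (Int.castRingHom (ZMod 7))

lemma h7 : (7 : PowerSeries (ZMod 7)) = 0 := by
  rw [← map_ofNat (C (R := ZMod 7)) 7, show ((OfNat.ofNat 7 : ZMod 7)) = 0 from rfl, map_zero]

lemma modN (N : ℕ) {f g : PowerSeries ℤ} (h : map (Int.castRingHom (ZMod N)) f =
    map (Int.castRingHom (ZMod N)) g) : ∃ Z, f = g + (N : PowerSeries ℤ) * Z := by
  have : ∀ n, ∃ z : ℤ, coeff n f = coeff n g + N * z := by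
    intro n
    have := congrArg (coeff n) h
    rw [coeff_map, coeff_map] at this
    obtain ⟨z, hz⟩ := (ZMod.intCast_eq_intCast_iff_dvd_sub _ _ _).mp this
    exact ⟨-z, by linear_combination -hz⟩
  choose z hz using this
  refine ⟨mk z, PowerSeries.ext fun n => ?_⟩
  rw [hz, map_add, ← map_natCast (C (R := ℤ)) N, coeff_C_mul, coeff_mk]

instance : Fact (Nat.Prime 7) := ⟨by norm_num⟩

lemma frob (f : PowerSeries (ZMod 7)) : ex 7 f = f ^ 7 := by
  have := MvPowerSeries.map_frobenius_expand (R := ZMod 7) 7 (NeZero.ne 7) (σ := Unit) (f := f)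
  rw [ZMod.frobenius_zmod] at this
  rw [← this]
  ext n
  exact (congrArg (coeff n) (MvPowerSeries.map_id (σ := Unit) (R := ZMod 7) ▸ rfl))

lemma m7_ex7 (f : PowerSeries ℤ) : m7 (ex 7 f) = (m7 f) ^ 7 := by
  rw [m7, ex_map, frob]

lemma J_seven (b : ℕ) [NeZero b] : J (7 * b) = ex 7 (J b) := by
  rw [J_ex (7 * b), J_ex b, ex_ex]

lemma th_m7 (f : PowerSeries ℤ) : th (m7 f) = m7 (th f) := th_map _ _

def th6 {R : Type*} [CommRing R] (f : PowerSeries R) : PowerSeries R :=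
  th (th (th (th (th (th f)))))

lemma th6_coeff (f : PowerSeries (ZMod 7)) (n : ℕ) : coeff (7 * n) (th6 f) = 0 := by
  have : ((7 : ℕ) : ZMod 7) = 0 := rfl
  rw [th6, th_coeff]; push_cast
  rw [show (7 : ZMod 7) = 0 from rfl]; ring

lemma U_of (f h : PowerSeries (ZMod 7)) (hf : f - th6 f = h ^ 7) (n : ℕ) :
    coeff (7 * n) f = coeff n h := by
  have := congrArg (coeff (7 * n)) hf
  rw [map_sub, th6_coeff, sub_zero, ← frob, ex_coeff_mul] at this
  exact this

def A7 : PowerSeries (ZMod 7) := m7 ea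
def D7 : PowerSeries (ZMod 7) := m7 ed
def E7 : PowerSeries (ZMod 7) := m7 eP
def B7 : PowerSeries (ZMod 7) := A7 ^ 2 - 2 * D7
def u7 : PowerSeries (ZMod 7) := A7 ^ 3

lemma m7_ofNat (k : ℕ) [k.AtLeastTwo] : m7 (ofNat(k)) = ofNat(k) := map_ofNat m7 k

lemma m7_eR : m7 eR = 1 := by
  rw [eR, map_sub, map_one, map_mul, m7_ofNat]
  linear_combination (-72 * m7 (S 5)) * h7

lemma AB : A7 * B7 = 1 := by
  have := congrArg m7 R1_eq
  simp only [m7_eR, map_sub, map_mul, map_pow, m7_ofNat] at this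
  rw [B7, A7, D7]
  linear_combination -this + (82 * m7 ea * m7 ed) * h7

lemma D7_eq : D7 = 4 * (A7 ^ 2 - B7) := by
  rw [B7]; linear_combination - D7 * h7

lemma Q7_eq : m7 eQ = A7 ^ 2 + 3 * D7 := by
  rw [Q1_eq]
  simp only [map_add, map_mul, map_pow, m7_ofNat]
  rw [A7, D7]
  linear_combination 27 * m7 ed * h7

lemma E7_eq0 : E7 = A7 ^ 4 + 3 * A7 + 4 * B7 ^ 2 := by
  have h := congrArg m7 ram6
  rw [map_mul, ← th_m7, m7_eR, th_one, map_sub, map_mul, map_mul, m7_eR, Q7_eq, D7_eq, mul_zero,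
    ← E7] at h
  linear_combination -h - 2 * 12 * 13 * A7 * AB +
    (24 * A7 ^ 4 - 45 * A7 + 20 * B7 ^ 2) * h7

lemma E7_eq : E7 = B7 ^ 2 * (u7 ^ 2 + 3 * u7 + 4) := by
  rw [E7_eq0, u7]
  linear_combination (-A7 ^ 4 - 3 * A7) * (A7 * B7 + 1) * AB

lemma Bu : B7 ^ 3 * u7 = 1 := by
  rw [u7]; linear_combination ((A7 * B7) ^ 2 + A7 * B7 + 1) * AB

lemma Bu6 : B7 ^ 6 * u7 ^ 2 = 1 := by linear_combination (B7 ^ 3 * u7 + 1) * Bu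

lemma A7_eq : A7 = B7 ^ 2 * u7 := by
  rw [u7]; linear_combination -A7 * (A7 * B7 + 1) * AB

lemma D7_eq' : D7 = 4 * B7 ^ 4 * u7 * (u7 - 1) := by
  rw [D7_eq]; 
  linear_combination 4 * (A7 + B7 ^ 2 * u7) * A7_eq + 4 * B7 * Bu

lemma th_A7 : th A7 = B7 - A7 ^ 5 := by
  have h := congrArg m7 th_ea
  simp only [map_mul, map_add, map_sub, m7_ofNat, ← th_m7] at h
  rw [← A7, ← E7, ← D7, D7_eq, E7_eq0] at h
  linear_combination -h + (th A7 + 109 * B7 - 110 * A7 ^ 2) * h7 - 4 * B7 * AB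

lemma th_B7 : th B7 = -(B7 ^ 3 * (1 - u7 ^ 2)) := by
  have h := congrArg th AB
  rw [th_mul, th_one, th_A7] at h
  rw [u7]
  linear_combination B7 * h - th B7 * AB - A7 ^ 5 * B7 ^ 2 * AB

lemma th_u7 : th u7 = 3 * B7 ^ 2 * u7 * (1 - u7 ^ 2) := by
  rw [u7, th_pow, th_A7]
  push_cast
  linear_combination (3 * A7 ^ 2 * A7 ^ 5 * (A7 * B7 + 1) - 3 * A7 ^ 2 * B7) * AB

lemma m7_J7 : m7 (J 7) = m7 (J 1) ^ 7 := by rw [← m7_ex7, ← J_seven 1]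
lemma m7_J14 : m7 (J 14) = m7 (J 2) ^ 7 := by rw [← m7_ex7, ← J_seven 2]

lemma m7_c0 (f : PowerSeries ℤ) (h : coeff 0 f = 1) : m7 f ≠ 0 := by
  intro h0
  have := congrArg (coeff 0) h0
  rw [m7, coeff_map, h] at this
  simp at this

lemma m7_J_ne (b : ℕ) [NeZero b] : m7 (J b) ≠ 0 := m7_c0 _ (by rw [J_c0]; simp [NeZero.ne])

lemma th_S5 : th (m7 (S 5)) = 5 * (E7 ^ 7 - E7) := by
  obtain ⟨Z, hZ⟩ := modN 49 J7_mod
  have h := congrArg th hZ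
  have t7 : th (J 7) = -(7 * ex 7 (S 1) * J 7) := by exact_mod_cast th_Jb 7
  rw [th_add, th_mul, th_mul, th_pow, th_J1, t7, th_sub, th_mul, th_natCast, th_one, th_ofNat] at h
  have h2 : J 7 * th (S 5) - S 1 * J 1 ^ 7 + ex 7 (S 1) * J 7 * (1 - 7 * S 5) - 7 * th Z = 0 := by
    apply ofNat_cancel 7
    push_cast at h
    linear_combination h
  have h3 := congrArg m7 h2
  simp only [map_sub, map_add, map_mul, map_pow, map_one, map_zero, m7_ofNat, m7_J7, m7_ex7,
    ← th_m7] at h3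
  have h4 : m7 (J 1) ^ 7 * (th (m7 (S 5)) - m7 (S 1) + m7 (S 1) ^ 7) = 0 := by
    linear_combination h3 + (m7 (S 1) ^ 7 * m7 (J 1) ^ 7 * m7 (S 5) + th (m7 Z)) * h7
  have h5 := (mul_eq_zero.mp h4).resolve_left (pow_ne_zero _ (m7_J_ne 1))
  have hs : m7 (S 1) = 5 * (1 - E7) := by
    rw [E7, eP, map_sub, map_one, map_mul, m7_ofNat]
    linear_combination -17 * m7 (S 1) * h7
  have hs7 : m7 (S 1) ^ 7 = 5 * (1 - E7 ^ 7) := by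
    rw [hs, mul_pow, ← frob (1 - E7), map_sub, map_one, frob]
    linear_combination 11160 * (1 - E7 ^ 7) * h7
  linear_combination h5 + hs - hs7

end modseven


section chains
open PowerSeries

lemma chG (F : PowerSeries (ZMod 7)) (hF : th F = F * (B7 ^ 2 * (2 + 5 * u7 + 4 * u7 ^ 2))) :
    th6 F = F * (B7 ^ 12 * (3 * u7 + 2 * u7 ^ 2 + 5 * u7 ^ 4 + 3 * u7 ^ 5 + 4 * u7 ^ 6 + 3 * u7
        ^ 7 + 5 * u7 ^ 9 + 4 * u7 ^ 10)) := by
  have s2 : th (th F) = F * (B7 ^ 4 * (4 * u7 + 5 * u7 ^ 2)) := by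
    rw [hF]
    simp only [th_mul, th_add, th_pow, th_ofNat, th_one, th_zero, hF, th_B7, th_u7]
    push_cast
    linear_combination (F * B7 ^ 4 * (3 * u7 + 8 * u7 ^ 2 + 5 * u7 ^ 3)) * h7
  have s3 : th (th (th F)) = F * (B7 ^ 6 * (4 * u7 + 5 * u7 ^ 2 + 3 * u7 ^ 3 + 3 * u7 ^ 4)) := by
    rw [s2]
    simp only [th_mul, th_add, th_pow, th_ofNat, th_one, th_zero, hF, th_B7, th_u7]
    push_cast
    linear_combination (F * B7 ^ 6 * (5 * u7 ^ 2 + 6 * u7 ^ 3 + u7 ^ 4)) * h7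
  have s4 : th (th (th (th F))) = F * (B7 ^ 8 * (3 * u7 + 2 * u7 ^ 2 + 5 * u7 ^ 3 + 3 * u7 ^ 4 +
      4 * u7 ^ 5 + u7 ^ 6)) := by
    rw [s3]
    simp only [th_mul, th_add, th_pow, th_ofNat, th_one, th_zero, hF, th_B7, th_u7]
    push_cast
    linear_combination (F * B7 ^ 8 * ((-1) * u7 + 4 * u7 ^ 2 + 9 * u7 ^ 3 + 8 * u7 ^ 4 + 2 * u7
        ^ 5 + (-1) * u7 ^ 6)) * h7
  have s5 : th (th (th (th (th F)))) = F * (B7 ^ 10 * (5 * u7 + u7 ^ 2 + 3 * u7 ^ 3 + 6 * u7 ^ 4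
      + 3 * u7 ^ 5 + 4 * u7 ^ 6 + u7 ^ 8)) := by
    rw [s4]
    simp only [th_mul, th_add, th_pow, th_ofNat, th_one, th_zero, hF, th_B7, th_u7]
    push_cast
    linear_combination (F * B7 ^ 10 * ((-2) * u7 + 2 * u7 ^ 2 + 7 * u7 ^ 3 + 7 * u7 ^ 4 + 9 * u7
        ^ 5 + 4 * u7 ^ 6 + (-1) * u7 ^ 7 + (-1) * u7 ^ 8)) * h7
  have s6 : th (th (th (th (th (th F))))) = F * (B7 ^ 12 * (3 * u7 + 2 * u7 ^ 2 + 5 * u7 ^ 4 + 3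
      * u7 ^ 5 + 4 * u7 ^ 6 + 3 * u7 ^ 7 + 5 * u7 ^ 9 + 4 * u7 ^ 10)) := by
    rw [s5]
    simp only [th_mul, th_add, th_pow, th_ofNat, th_one, th_zero, hF, th_B7, th_u7]
    push_cast
    linear_combination (F * B7 ^ 12 * ((-4) * u7 + 3 * u7 ^ 2 + 9 * u7 ^ 3 + 6 * u7 ^ 4 + 9 * u7
        ^ 5 + 9 * u7 ^ 6 + 2 * u7 ^ 7 + (-2) * u7 ^ 10)) * h7
  exact s6

lemma chH (F : PowerSeries (ZMod 7)) (hF : th F = F * (B7 ^ 2 * (1 + 3 * u7 + 2 * u7 ^ 2))) :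
    th6 F = F * (B7 ^ 12 * (u7 ^ 4 + 3 * u7 ^ 6 + 4 * u7 ^ 7)) := by
  have s2 : th (th F) = F * (B7 ^ 4 * (6 + 2 * u7 + 2 * u7 ^ 2 + 2 * u7 ^ 3 + 3 * u7 ^ 4)) := by
    rw [hF]
    simp only [th_mul, th_add, th_pow, th_ofNat, th_one, th_zero, hF, th_B7, th_u7]
    push_cast
    linear_combination (F * B7 ^ 4 * ((-1) + u7 + 3 * u7 ^ 2 + u7 ^ 3 + (-1) * u7 ^ 4)) * h7
  have s3 : th (th (th F)) = F * (B7 ^ 6 * (3 + 4 * u7 + 6 * u7 ^ 2 + 3 * u7 ^ 3 + 5 * u7 ^ 4 +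
      3 * u7 ^ 5 + 3 * u7 ^ 6)) := by
    rw [s2]
    simp only [th_mul, th_add, th_pow, th_ofNat, th_one, th_zero, hF, th_B7, th_u7]
    push_cast
    linear_combination (F * B7 ^ 6 * ((-3) + 2 * u7 + 6 * u7 ^ 2 + 3 * u7 ^ 3 + 4 * u7 ^ 4 +
        (-3) * u7 ^ 6)) * h7
  have s4 : th (th (th (th F))) = F * (B7 ^ 8 * (6 + u7 + u7 ^ 3 + 2 * u7 ^ 7 + 5 * u7 ^ 8)) := by
    rw [s3]
    simp only [th_mul, th_add, th_pow, th_ofNat, th_one, th_zero, hF, th_B7, th_u7]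
    push_cast
    linear_combination (F * B7 ^ 8 * ((-3) + 6 * u7 ^ 2 + 7 * u7 ^ 3 + 8 * u7 ^ 4 + 6 * u7 ^ 5 +
        4 * u7 ^ 6 + (-2) * u7 ^ 7 + (-5) * u7 ^ 8)) * h7
  have s5 : th (th (th (th (th F)))) = F * (B7 ^ 10 * (2 * u7 ^ 3 + 3 * u7 ^ 4 + u7 ^ 5)) := by
    rw [s4]
    simp only [th_mul, th_add, th_pow, th_ofNat, th_one, th_zero, hF, th_B7, th_u7]
    push_cast
    linear_combination (F * B7 ^ 10 * ((-6) + 2 * u7 + 9 * u7 ^ 2 + u7 ^ 3 + 4 * u7 ^ 7 + 13 *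
        u7 ^ 8 + (-1) * u7 ^ 9 + (-10) * u7 ^ 10)) * h7
  have s6 : th (th (th (th (th (th F))))) = F * (B7 ^ 12 * (u7 ^ 4 + 3 * u7 ^ 6 + 4 * u7 ^ 7))
      := by
    rw [s5]
    simp only [th_mul, th_add, th_pow, th_ofNat, th_one, th_zero, hF, th_B7, th_u7]
    push_cast
    linear_combination (F * B7 ^ 12 * (2 * u7 ^ 4 + 3 * u7 ^ 5 + (-1) * u7 ^ 7)) * h7
  exact s6

lemma chE (F s w : PowerSeries (ZMod 7)) (hF : th F = F * (B7 ^ 2 * (4 + u7 ^ 2)))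
    (hs : th s = 4 * (w - E7)) (hw : th w = 0) :
    th6 (F * (s + B7 ^ 6 * (6 + 5 * u7 ^ 2 + 5 * u7 ^ 3 + 4 * u7 ^ 4 + 6 * u7 ^ 6))) = F * (B7 ^
        12 * (u7 ^ 4) * s + B7 ^ 18 * (1 + 3 * u7 ^ 2 + u7 ^ 4 + 5 * u7 ^ 6 + u7 ^ 7 + 4 * u7 ^
        8 + 3 * u7 ^ 9 + 6 * u7 ^ 10 + 2 * u7 ^ 11 + 6 * u7 ^ 14 + 5 * u7 ^ 16 + u7 ^ 18) + w *
        (B7 ^ 10 * (4 * u7 ^ 2 + 3 * u7 ^ 4 + 2 * u7 ^ 6))) := by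
  rw [E7_eq] at hs
  have s1 : th (F * (s + B7 ^ 6 * (6 + 5 * u7 ^ 2 + 5 * u7 ^ 3 + 4 * u7 ^ 4 + 6 * u7 ^ 6))) = F
      * (B7 ^ 2 * (4 + u7 ^ 2) * s + B7 ^ 8 * (2 + 4 * u7 ^ 2 + 2 * u7 ^ 3 + 6 * u7 ^ 4 + 4 * u7
      ^ 5 + 6 * u7 ^ 6 + 4 * u7 ^ 8) + w * (4)) := by
    simp only [th_mul, th_add, th_pow, th_ofNat, th_one, th_zero, hF, th_B7, th_u7, hs, hw]
    push_cast
    linear_combination (F * (B7 ^ 2 * 0 * s + B7 ^ 8 * ((-2) + 6 * u7 ^ 2 + 3 * u7 ^ 3 + 5 * u7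
        ^ 4 + (-2) * u7 ^ 5 + 10 * u7 ^ 6 + (-10) * u7 ^ 8) + w * B7 ^ 0 * 0)) * h7
      + 4 * F * B7 ^ 2 * (4 + 3 * u7 + u7 ^ 2) * (1) * Bu6
  have s2 : th (th (F * (s + B7 ^ 6 * (6 + 5 * u7 ^ 2 + 5 * u7 ^ 3 + 4 * u7 ^ 4 + 6 * u7 ^ 6))))
      = F * (B7 ^ 4 * (1 + 6 * u7 ^ 2 + 4 * u7 ^ 4) * s + B7 ^ 10 * (6 + 4 * u7 ^ 2 + 4 * u7 ^ 3
      + 4 * u7 ^ 5 + 6 * u7 ^ 6 + 4 * u7 ^ 7 + 5 * u7 ^ 8 + 3 * u7 ^ 10) + w * (B7 ^ 2 * (4 + u7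
      ^ 2))) := by
    rw [s1]
    simp only [th_mul, th_add, th_pow, th_ofNat, th_one, th_zero, hF, th_B7, th_u7, hs, hw]
    push_cast
    linear_combination (F * (B7 ^ 4 * (1 + 2 * u7 ^ 2 + (-1) * u7 ^ 4) * s + B7 ^ 10 * ((-2) +
        (-6) * u7 ^ 2 + (-6) * u7 ^ 3 + 4 * u7 ^ 4 + 4 * u7 ^ 5 + 8 * u7 ^ 6 + (-4) * u7 ^ 7 + 3
        * u7 ^ 8 + (-9) * u7 ^ 10) + w * B7 ^ 2 * (4 + u7 ^ 2))) * h7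
      + 4 * F * B7 ^ 4 * (4 + 3 * u7 + u7 ^ 2) * (4 + u7 ^ 2) * Bu6
  have s3 : th (th (th (F * (s + B7 ^ 6 * (6 + 5 * u7 ^ 2 + 5 * u7 ^ 3 + 4 * u7 ^ 4 + 6 * u7 ^
      6))))) = F * (B7 ^ 6 * (6 * u7 ^ 2) * s + B7 ^ 12 * (6 + u7 ^ 2 + 4 * u7 ^ 4 + 5 * u7 ^ 6
      + 3 * u7 ^ 7 + 4 * u7 ^ 8 + 2 * u7 ^ 9 + 6 * u7 ^ 12) + w * (B7 ^ 4 * (5 + 2 * u7 ^ 2 + 6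
      * u7 ^ 4))) := by
    rw [s2]
    simp only [th_mul, th_add, th_pow, th_ofNat, th_one, th_zero, hF, th_B7, th_u7, hs, hw]
    push_cast
    linear_combination (F * (B7 ^ 6 * (5 * u7 ^ 2 + 6 * u7 ^ 4 + (-4) * u7 ^ 6) * s + B7 ^ 12 *
        ((-6) + 7 * u7 ^ 2 + (-12) * u7 ^ 4 + (-4) * u7 ^ 5 + (-3) * u7 ^ 6 + (-1) * u7 ^ 7 + 4
        * u7 ^ 8 + (-6) * u7 ^ 9 + u7 ^ 10 + (-9) * u7 ^ 12) + w * B7 ^ 4 * (1 + 6 * u7 ^ 2 + u7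
        ^ 4))) * h7
      + 4 * F * B7 ^ 6 * (4 + 3 * u7 + u7 ^ 2) * (1 + 6 * u7 ^ 2 + 4 * u7 ^ 4) * Bu6
  have s4 : th (th (th (th (F * (s + B7 ^ 6 * (6 + 5 * u7 ^ 2 + 5 * u7 ^ 3 + 4 * u7 ^ 4 + 6 * u7
      ^ 6)))))) = F * (B7 ^ 8 * (3 * u7 ^ 2 + 6 * u7 ^ 4) * s + B7 ^ 14 * (1 + 6 * u7 ^ 2 + 4 *
      u7 ^ 4 + 5 * u7 ^ 5 + 2 * u7 ^ 6 + 4 * u7 ^ 7 + 4 * u7 ^ 8 + 5 * u7 ^ 10 + 2 * u7 ^ 14) +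
      w * (B7 ^ 6 * (5 * u7 ^ 2))) := by
    rw [s3]
    simp only [th_mul, th_add, th_pow, th_ofNat, th_one, th_zero, hF, th_B7, th_u7, hs, hw]
    push_cast
    linear_combination (F * (B7 ^ 8 * (3 * u7 ^ 2) * s + B7 ^ 14 * ((-7) + 10 * u7 ^ 2 + (-11) *
        u7 ^ 4 + (-11) * u7 ^ 5 + 4 * u7 ^ 6 + 5 * u7 ^ 7 + 5 * u7 ^ 8 + 2 * u7 ^ 9 + (-7) * u7
        ^ 10 + (-4) * u7 ^ 11 + 24 * u7 ^ 12 + (-20) * u7 ^ 14) + w * B7 ^ 6 * (8 * u7 ^ 2 + 10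
        * u7 ^ 4 + (-6) * u7 ^ 6))) * h7
      + 4 * F * B7 ^ 8 * (4 + 3 * u7 + u7 ^ 2) * (6 * u7 ^ 2) * Bu6
  have s5 : th (th (th (th (th (F * (s + B7 ^ 6 * (6 + 5 * u7 ^ 2 + 5 * u7 ^ 3 + 4 * u7 ^ 4 + 6
      * u7 ^ 6))))))) = F * (B7 ^ 10 * (6 * u7 ^ 2 + u7 ^ 4 + 3 * u7 ^ 6) * s + B7 ^ 16 * (4 + 5
      * u7 ^ 2 + 3 * u7 ^ 5 + 4 * u7 ^ 6 + 5 * u7 ^ 8 + 4 * u7 ^ 9 + u7 ^ 10 + 2 * u7 ^ 12 + u7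
      ^ 14 + 2 * u7 ^ 16) + w * (B7 ^ 8 * (4 * u7 ^ 2 + u7 ^ 4))) := by
    rw [s4]
    simp only [th_mul, th_add, th_pow, th_ofNat, th_one, th_zero, hF, th_B7, th_u7, hs, hw]
    push_cast
    linear_combination (F * (B7 ^ 10 * (8 * u7 ^ 4 + (-3) * u7 ^ 6) * s + B7 ^ 16 * ((-2) + (-2)
        * u7 ^ 2 + 2 * u7 ^ 4 + (-2) * u7 ^ 5 + (-12) * u7 ^ 6 + (-4) * u7 ^ 7 + 3 * u7 ^ 8 +
        (-4) * u7 ^ 9 + 9 * u7 ^ 10 + (-11) * u7 ^ 12 + 9 * u7 ^ 14 + (-8) * u7 ^ 16) + w * B7 ^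
        8 * (4 * u7 ^ 2 + 4 * u7 ^ 4))) * h7
      + 4 * F * B7 ^ 10 * (4 + 3 * u7 + u7 ^ 2) * (3 * u7 ^ 2 + 6 * u7 ^ 4) * Bu6
  have s6 : th (th (th (th (th (th (F * (s + B7 ^ 6 * (6 + 5 * u7 ^ 2 + 5 * u7 ^ 3 + 4 * u7 ^ 4
      + 6 * u7 ^ 6)))))))) = F * (B7 ^ 12 * (u7 ^ 4) * s + B7 ^ 18 * (1 + 3 * u7 ^ 2 + u7 ^ 4 +
      5 * u7 ^ 6 + u7 ^ 7 + 4 * u7 ^ 8 + 3 * u7 ^ 9 + 6 * u7 ^ 10 + 2 * u7 ^ 11 + 6 * u7 ^ 14 +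
      5 * u7 ^ 16 + u7 ^ 18) + w * (B7 ^ 10 * (4 * u7 ^ 2 + 3 * u7 ^ 4 + 2 * u7 ^ 6))) := by
    rw [s5]
    simp only [th_mul, th_add, th_pow, th_ofNat, th_one, th_zero, hF, th_B7, th_u7, hs, hw]
    push_cast
    linear_combination (F * (B7 ^ 12 * (5 * u7 ^ 4 + 5 * u7 ^ 6 + (-3) * u7 ^ 8) * s + B7 ^ 18 *
        ((-7) + 5 * u7 ^ 2 + (-6) * u7 ^ 4 + (-9) * u7 ^ 5 + (-3) * u7 ^ 6 + (-1) * u7 ^ 7 + 3 *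
        u7 ^ 9 + (-5) * u7 ^ 10 + (-6) * u7 ^ 11 + 5 * u7 ^ 12 + (-2) * u7 ^ 14 + 6 * u7 ^ 16 +
        (-9) * u7 ^ 18) + w * B7 ^ 10 * (4 * u7 ^ 2 + 3 * u7 ^ 4 + u7 ^ 6))) * h7
      + 4 * F * B7 ^ 12 * (4 + 3 * u7 + u7 ^ 2) * (6 * u7 ^ 2 + u7 ^ 4 + 3 * u7 ^ 6) * Bu6
  exact s6

end chains


section apply
open PowerSeries

/-- inverse of `J b` -/
def iJ (b : ℕ) : PowerSeries ℤ := invOfUnit (J b) 1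

lemma J_iJ (b : ℕ) [NeZero b] : J b * iJ b = 1 := by
  apply mul_invOfUnit
  have := J_c0 b
  rw [if_neg (NeZero.ne b)] at this
  simpa using this

lemma th_iJ1 : th (iJ 1) = S 1 * iJ 1 := by
  have h := congrArg th (J_iJ 1)
  rw [th_mul, th_J1, th_one] at h
  linear_combination iJ 1 * h + (S 1 * iJ 1 - th (iJ 1)) * J_iJ 1

def F0 : PowerSeries ℤ := X ^ 12 * J 2 ^ 5 * iJ 1 ^ 16

lemma th_F0 : th F0 = F0 * (12 - 10 * s2 + 16 * S 1) := by
  rw [F0, th_mul, th_mul, th_pow, th_pow, th_pow, th_X, th_J2, th_iJ1]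
  push_cast; ring

lemma th_F0' : 24 * th F0 = F0 * (5 * ea - 11 * eP + 294) := by
  rw [th_F0, ea_s, eP_s]; ring

def W0 : PowerSeries ℤ := 13824 * 72 * S 5 + ((-11340) * eP * ea + (-81) * eP * ea ^ 2 +
    (-24192) * eP * ed + (-407484) * eP + 135 * eP ^ 2 * ea + 12474 * eP ^ 2 + (-99) * eP ^ 3 +
    (-1102464) * ea * ed + 185220 * ea + 3402 * ea ^ 2 + 1989 * ea ^ 3 + 1016064 * ed + 3630312)

lemma F0_three : 13824 * (th (th (th F0)) + F0) = 7 * (F0 * W0) := by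
  have h1 := th_F0'
  have tP := th_eP
  have ta := th_ea
  have td := th_ed
  have h2 : 576 * th (th F0) = F0 * ((-90) * eP * ea + (-6468) * eP + 99 * eP ^ 2 + 2940 * ea +
      27 * ea ^ 2 + 8064 * ed + 86436) := by
    have := congrArg th h1
    simp only [th_mul, th_add, th_sub, th_ofNat] at this
    linear_combination 24 * this + (5 * ea - 11 * eP + 294) * h1 + F0 * (20 * ta - 22 * tP)
  have h3 : 13824 * th (th (th F0)) = F0 * ((-79380) * eP * ea + (-567) * eP * ea ^ 2 +
      (-169344) * eP * ed + (-2852388) * eP + 945 * eP ^ 2 * ea + 87318 * eP ^ 2 + (-693) * eP ^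
      3 + 245376 * ea * ed + 1296540 * ea + 23814 * ea ^ 2 + 99 * ea ^ 3 + 7112448 * ed +
      25412184) := by
    have := congrArg th h2
    simp only [th_mul, th_add, th_sub, th_ofNat, th_neg, th_pow, th_one] at this
    push_cast at this
    linear_combination 24 * this + ((-90) * eP * ea + (-6468) * eP + 99 * eP ^ 2 + 2940 * ea +
        27 * ea ^ 2 + 8064 * ed + 86436) * h1 + F0 * (4 * (-90 * eP + 2940 + 54 * ea) * ta
      + 2 * (-90 * ea - 6468 + 198 * eP) * tP + 8 * 8064 * td)
  have hr : ea ^ 3 - 576 * ea * ed = 1 - 504 * S 5 := R1_eq.symm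
  rw [W0]
  linear_combination h3 - 13824 * F0 * hr

def F7 : PowerSeries (ZMod 7) := m7 F0
lemma th_F7 : th F7 = F7 * (B7 ^ 2 * (4 + u7 ^ 2)) := by
  have h := congrArg m7 th_F0'
  simp only [map_mul, map_add, map_sub, m7_ofNat, ← th_m7] at h
  rw [← A7, ← E7, ← F7, A7_eq, E7_eq] at h
  linear_combination 5 * h + (-17 * th F7 + F7 * (210 - B7 ^ 2 * (8 * u7 ^ 2 + 20 * u7 + 32))) *
      h7

lemma W7 : m7 W0 = -2 * m7 (S 5) + B7 ^ 6 * (6 + 5 * u7 ^ 2 + 5 * u7 ^ 3 + 4 * u7 ^ 4 + 6 * u7 ^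
    6) := by
  have h : m7 W0 = -2 * m7 (S 5) + (3 * E7 * A7 ^ 2 + 2 * E7 ^ 2 * A7 + 6 * E7 ^ 3 + 1 * A7 * D7
      + 1 * A7 ^ 3) := by
    rw [W0]
    simp only [map_mul, map_add, map_sub, map_pow, map_neg, m7_ofNat]
    rw [← A7, ← E7, ← D7]
    linear_combination (142190 * m7 (S 5) + ((-1620) * E7 * A7 + (-12) * E7 * A7 ^ 2 + (-3456) *
        E7 * D7 + (-58212) * E7 + 19 * E7 ^ 2 * A7 + 1782 * E7 ^ 2 + (-15) * E7 ^ 3 + (-157495)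
        * A7 * D7 + 26460 * A7 + 486 * A7 ^ 2 + 284 * A7 ^ 3 + 145152 * D7 + 518616)) * h7
  rw [h, E7_eq, A7_eq, D7_eq']
  linear_combination (B7 ^ 6 * (54 + 128 * u7 + 141 * u7 ^ 2 + 91 * u7 ^ 3 + 35 * u7 ^ 4 + 8 *
      u7 ^ 5)) * h7

lemma Bu12 : B7 ^ 12 * u7 ^ 4 = 1 := by linear_combination (B7 ^ 6 * u7 ^ 2 + 1) * Bu6

/-- residues of the eta products -/
def j1 : PowerSeries (ZMod 7) := m7 (J 1)
def j2 : PowerSeries (ZMod 7) := m7 (J 2)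
def i1 : PowerSeries (ZMod 7) := m7 (iJ 1)
def i2 : PowerSeries (ZMod 7) := m7 (iJ 2)
def c7 : PowerSeries (ZMod 7) := A7 ^ 2 - D7
lemma ji1 : j1 * i1 = 1 := by rw [j1, i1, ← map_mul, J_iJ, map_one]
lemma ji2 : j2 * i2 = 1 := by rw [j2, i2, ← map_mul, J_iJ, map_one]
lemma m7_X : m7 X = X := map_X _
lemma ji1' (n : ℕ) : j1 ^ n * i1 ^ n = 1 := by rw [← mul_pow, ji1, one_pow]
lemma ji2' (n : ℕ) : j2 ^ n * i2 ^ n = 1 := by rw [← mul_pow, ji2, one_pow]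
lemma c7_eta : c7 * j2 ^ 8 = j1 ^ 16 := by
  have h := congrArg m7 c_eta
  simp only [map_mul, map_sub, map_pow, m7_ofNat] at h
  rw [← A7, ← D7, ← j1, ← j2] at h
  rw [c7]
  linear_combination h + 9 * D7 * j2 ^ 8 * h7
lemma d7_eta : D7 * j1 ^ 8 = X * j2 ^ 16 := by
  have h := congrArg m7 d_eta
  simp only [map_mul, map_pow, m7_X] at h
  exact h
lemma c7_val : c7 = j1 ^ 16 * i2 ^ 8 := by
  linear_combination i2 ^ 8 * c7_eta - c7 * ji2' 8
lemma d7_val : D7 = X * j2 ^ 16 * i1 ^ 8 := by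
  linear_combination i1 ^ 8 * d7_eta - D7 * ji1' 8
lemma c7_Bu : c7 = 4 * B7 ^ 4 * u7 * (u7 + 1) := by
  rw [c7, D7_eq', A7_eq]
  linear_combination (-B7 ^ 4 * u7 ^ 2) * h7

lemma F7_res : F7 = X ^ 12 * j2 ^ 5 * i1 ^ 16 := by
  rw [F7, F0]
  simp only [map_mul, map_pow, m7_X]
  rfl

lemma E_res : m7 (F0 * W0) - th6 (m7 (F0 * W0)) = (-3 * X ^ 4 * j2 ^ 35 * i1 ^ 16) ^ 7 := by
  rw [map_mul, W7, ← F7]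
  have hs : th (-2 * m7 (S 5)) = 4 * (E7 ^ 7 - E7) := by
    rw [th_mul, th_neg, th_ofNat, th_S5]
    linear_combination -2 * (E7 ^ 7 - E7) * h7
  have hw : th (E7 ^ 7) = 0 := by
    rw [th_pow]; push_cast; linear_combination E7 ^ 6 * th E7 * h7
  rw [chE F7 _ _ th_F7 hs hw]
  have e1 : F7 * (c7 ^ 2 * D7 ^ 16) = X ^ 28 * j2 ^ 245 * i1 ^ 112 := by
    have hc : c7 ^ 2 * j2 ^ 16 = j1 ^ 32 := by
      linear_combination (c7 * j2 ^ 8 + j1 ^ 16) * c7_eta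
    rw [F7_res, d7_val]
    linear_combination X ^ 28 * i1 ^ 144 * j2 ^ 245 * hc + X ^ 28 * j2 ^ 245 * i1 ^ 112 * ji1' 32
  have e2 : c7 ^ 2 * D7 ^ 16 = B7 ^ 18 * ((u7 + 1) ^ 2 * (u7 - 1) ^ 16) := by
    have hp : (B7 ^ 3 * u7) ^ 18 = 1 := by rw [Bu, one_pow]
    rw [c7_Bu, D7_eq']
    linear_combination 4 ^ 18 * B7 ^ 18 * ((u7 + 1) ^ 2 * (u7 - 1) ^ 16) * hp
      + 9817068105 * B7 ^ 18 * ((u7 + 1) ^ 2 * (u7 - 1) ^ 16) * h7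
  rw [e2] at e1
  rw [E7_eq]
  linear_combination -3 * e1 + 312 * X ^ 28 * j2 ^ 245 * i1 ^ 112 * h7
    + F7 * (2 * m7 (S 5) - B7 ^ 6 * (6 + 5 * u7 ^ 2 + 5 * u7 ^ 3 + 4 * u7 ^ 4 + 6 * u7 ^ 6)) *
        Bu12
    - F7 * B7 ^ 18 * (4 + 3 * u7 + u7 ^ 2) ^ 7 * (4 + 3 * u7 ^ 2 + 2 * u7 ^ 4) * Bu6
    + (F7 * B7 ^ 18 * ((-9362) + (-49158) * u7 + (-133960) * u7 ^ 2 + (-248976) * u7 ^ 3 +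
        (-353769) * u7 ^ 4 + (-415080) * u7 ^ 5 + (-417340) * u7 ^ 6 + (-370904) * u7 ^ 7 +
        (-291626) * u7 ^ 8 + (-197532) * u7 ^ 9 + (-117349) * u7 ^ 10 + (-57455) * u7 ^ 11 +
        (-23093) * u7 ^ 12 + (-8403) * u7 ^ 13 + (-1729) * u7 ^ 14 + (-567) * u7 ^ 15 + (-25) *
        u7 ^ 16 + (-12) * u7 ^ 17)) * h7

lemma UF0 (n : ℕ) : ((49 : ℤ) ∣ coeff (7 * n) F0 - 21 * coeff n (X ^ 4 * J 2 ^ 35 * iJ 1 ^ 16))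
    := by
  have h1 := U_of _ _ E_res n
  have h2 : (-3 * X ^ 4 * j2 ^ 35 * i1 ^ 16) = m7 (-3 * (X ^ 4 * J 2 ^ 35 * iJ 1 ^ 16)) := by
    simp only [map_mul, map_pow, m7_X, map_neg, m7_ofNat]
    rw [← j2, ← i1]; ring
  rw [h2, m7, coeff_map, coeff_map, neg_mul, map_neg, coeff_ofNat_mul] at h1
  rw [eq_intCast, eq_intCast] at h1
  obtain ⟨z, hz⟩ := (ZMod.intCast_eq_intCast_iff_dvd_sub _ _ 7).mp h1
  have h3 := congrArg (coeff (7 * n)) F0_three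
  rw [coeff_ofNat_mul, coeff_ofNat_mul, map_add, th_coeff, th_coeff, th_coeff] at h3
  push_cast at h3 hz
  have h4 : 13824 * (coeff (7 * n) F0) + 49 * (13824 * 7 * n ^ 3 * coeff (7 * n) F0) =
      7 * coeff (7 * n) (F0 * W0) := by linear_combination h3
  generalize (13824 * 7 * (n : ℤ) ^ 3 * coeff (7 * n) F0) = y1 at h4
  omega

def T7 : PowerSeries (ZMod 7) := X * j1 ^ 24
lemma th_T7 : th T7 = T7 * E7 := by
  have hj : th j1 = - (m7 (S 1) * j1) := by
    rw [j1, th_m7, th_J1, map_neg, map_mul]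
  have hE : E7 = 1 - 24 * m7 (S 1) := by
    rw [E7, eP_s, map_sub, map_one, map_mul, m7_ofNat]
  rw [T7, th_mul, th_pow, th_X, hj, hE]; push_cast; ring
lemma T7_cd : T7 = c7 ^ 2 * D7 := by
  rw [c7_val, d7_val, T7]
  linear_combination - X * j1 ^ 24 * (ji2' 16 + j2 ^ 16 * i2 ^ 16 * ji1' 8)
lemma T7_Bu : T7 = B7 ^ 3 * ((u7 + 1) ^ 2 * (u7 - 1)) := by
  have hp : (B7 ^ 3 * u7) ^ 3 = 1 := by rw [Bu, one_pow]
  rw [T7_cd, c7_Bu, D7_eq']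
  linear_combination 64 * B7 ^ 3 * ((u7 + 1) ^ 2 * (u7 - 1)) * hp
    + 9 * B7 ^ 3 * ((u7 + 1) ^ 2 * (u7 - 1)) * h7

lemma G_res : T7 ^ 4 - th6 (T7 ^ 4) = (3 * T7) ^ 7 := by
  have hF : th (T7 ^ 4) = T7 ^ 4 * (B7 ^ 2 * (2 + 5 * u7 + 4 * u7 ^ 2)) := by
    rw [th_pow, th_T7, E7_eq]; push_cast
    linear_combination T7 ^ 4 * B7 ^ 2 * (2 + u7) * h7
  rw [chG _ hF]
  have e : T7 ^ 3 = B7 ^ 9 * ((u7 + 1) ^ 6 * (u7 - 1) ^ 3) := by rw [T7_Bu]; ring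
  linear_combination -T7 ^ 4 * Bu12 - 3 * T7 ^ 4 * e
    + 3 * T7 ^ 4 * B7 ^ 9 * ((u7 + 1) ^ 6 * (u7 - 1) ^ 3) * Bu
    + (T7 ^ 4 * B7 ^ 12 * (u7 ^ 2 + (-4) * u7 ^ 4 + (-3) * u7 ^ 5 + 2 * u7 ^ 6 + 3 * u7 ^ 7 +
        (-2) * u7 ^ 9 + (-1) * u7 ^ 10)) * h7 - 312 * T7 ^ 7 * h7

lemma H_res : F7 * T7 - th6 (F7 * T7) = (-A7 * X ^ 2 * j2 ^ 3) ^ 7 := by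
  have hF : th (F7 * T7) = F7 * T7 * (B7 ^ 2 * (1 + 3 * u7 + 2 * u7 ^ 2)) := by
    rw [th_mul, th_F7, th_T7, E7_eq]
    linear_combination F7 * T7 * B7 ^ 2 * (1) * h7
  rw [chH _ hF]
  have e1 : D7 * (F7 * T7) = X ^ 14 * j2 ^ 21 := by
    rw [d7_val, F7_res, T7]
    linear_combination X ^ 14 * j2 ^ 21 * ji1' 24
  have e2 : A7 ^ 7 * D7 = 4 * B7 ^ 12 * u7 ^ 6 * (u7 - 1) := by
    rw [D7_eq', A7_eq]
    linear_combination 4 * B7 ^ 12 * u7 ^ 6 * (u7 - 1) * Bu6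
  linear_combination -F7 * T7 * Bu12 - A7 ^ 7 * e1 + F7 * T7 * e2
    + (F7 * T7 * B7 ^ 12 * ((-1) * u7 ^ 6)) * h7

lemma ad_S : ea * ed = S 5 - ex 2 (S 5) := by
  apply ofNat_cancel 504
  have h := R2_eq
  rw [R2, eR, map_sub, map_one, map_mul, map_ofNat (ex 2) 504] at h
  have h1 := R1_eq
  rw [eR] at h1
  linear_combination h1 - h

lemma p0_res (p0 : PowerSeries ℤ)
    (hp0 : (1 + 7 * p0) * ((J 1) ^ 7 * J 14) = 8 * (J 2) ^ 7 * J 7) : m7 p0 = 1 + A7 * D7 := by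
  obtain ⟨Z, hZ⟩ := modN 49 J7_mod
  have hZ2 := congrArg (ex 2) hZ
  have e7 : ex 2 (J 7) = J 14 := by rw [J_ex 7, J_ex 14, ex_ex]
  have e1 : ex 2 (J 1) = J 2 := by rw [J_ex 2]
  rw [map_pow, map_add, map_mul, map_mul, map_sub, map_one, map_mul, map_ofNat (ex 2) 7,
    map_natCast, e7, e1] at hZ2
  push_cast at hZ hZ2
  have h : J 7 * J 14 * (p0 - S 5 - 7 * p0 * S 5 - 1 + 8 * ex 2 (S 5)) +
      7 * ((1 + 7 * p0) * Z * J 14 - 8 * ex 2 Z * J 7) = 0 := by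
    apply ofNat_cancel 7
    linear_combination hp0 - (1 + 7 * p0) * J 14 * hZ + 8 * J 7 * hZ2
  have h3 := congrArg m7 h
  have h4 : m7 (J 7) * m7 (J 14) * (m7 p0 - m7 (S 5) - 1 + m7 (ex 2 (S 5))) = 0 := by
    simp only [map_mul, map_add, map_sub, map_one, map_zero, m7_ofNat] at h3
    linear_combination h3 - (((1 + 7 * m7 p0) * m7 Z * m7 (J 14) - 8 * m7 (ex 2 Z) * m7 (J 7))
      + m7 (J 7) * m7 (J 14) * (- m7 p0 * m7 (S 5) + m7 (ex 2 (S 5)))) * h7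
  have h5 := (mul_eq_zero.mp h4).resolve_left (mul_ne_zero (m7_J_ne 7) (m7_J_ne 14))
  have h6 := congrArg m7 ad_S
  rw [map_mul, map_sub, ← A7, ← D7] at h6
  linear_combination h5 - h6

end apply


section assembly
open PowerSeries

def uu (f : PowerSeries ℤ) : PowerSeries ℤ := mk fun n => coeff (7 * n) f

lemma uu_coeff (f : PowerSeries ℤ) (n : ℕ) : coeff n (uu f) = coeff (7 * n) f := coeff_mk _ _

lemma uu_add (f g : PowerSeries ℤ) : uu (f + g) = uu f + uu g := by
  ext n; simp only [uu_coeff, map_add]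

lemma uu_ofNat (k : ℕ) [k.AtLeastTwo] (f : PowerSeries ℤ) : uu (ofNat(k) * f) = ofNat(k) * uu f := by
  ext n; rw [uu_coeff, coeff_ofNat_mul, coeff_ofNat_mul, uu_coeff]

lemma uu_ex (f g : PowerSeries ℤ) : uu (f * ex 7 g) = uu f * g := by
  ext n
  rw [uu_coeff, coeff_mul, coeff_mul]
  symm
  refine Finset.sum_of_injOn (fun x => (7 * x.1, 7 * x.2)) ?_ ?_ ?_ ?_
  · rintro ⟨a, b⟩ - ⟨c, d⟩ - h
    simp only [Prod.mk.injEq] at h ⊢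
    omega
  · rintro ⟨a, b⟩ h
    simp only [Finset.mem_coe, Finset.HasAntidiagonal.mem_antidiagonal] at h ⊢
    omega
  · rintro ⟨a, b⟩ h h'
    rw [Finset.HasAntidiagonal.mem_antidiagonal] at h
    dsimp only at h ⊢
    rw [ex_coeff, if_neg, mul_zero]
    rintro ⟨k, rfl⟩
    apply h'
    refine ⟨(n - k, k), ?_, ?_⟩
    · simp only [Finset.mem_coe, Finset.HasAntidiagonal.mem_antidiagonal]; omega
    · simp only [Prod.mk.injEq, and_true]; omega
  · rintro ⟨a, b⟩ -
    dsimp only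
    rw [ex_coeff_mul, uu_coeff]

lemma seven_lift (f g : PowerSeries ℤ) (h : m7 f = m7 g) : ∃ Z, f = g + 7 * Z := by
  obtain ⟨Z, hZ⟩ := modN 7 h
  exact ⟨Z, by rw [hZ]; norm_num⟩

lemma uu_lift (f g : PowerSeries ℤ) (h : m7 f - th6 (m7 f) = (m7 g) ^ 7) :
    ∃ Z, uu f = g + 7 * Z := by
  apply seven_lift
  ext n
  have := U_of _ _ h n
  rw [m7, coeff_map, coeff_map] at this ⊢
  rw [uu_coeff, this]

lemma uu_F0 : ∃ Z, uu F0 = 21 * (X ^ 4 * J 2 ^ 35 * iJ 1 ^ 16) + 49 * Z := by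
  choose z hz using UF0
  refine ⟨mk z, ?_⟩
  ext n
  rw [map_add, uu_coeff, coeff_ofNat_mul, coeff_ofNat_mul, coeff_mk]
  linarith [hz n]

lemma i7 (b : ℕ) [NeZero b] : iJ (7 * b) = ex 7 (iJ b) := by
  have h1 := J_iJ (7 * b)
  have h2 := congrArg (ex 7) (J_iJ b)
  rw [map_mul, map_one, ← J_seven] at h2
  linear_combination ex 7 (iJ b) * h1 - iJ (7 * b) * h2

lemma m7_i7 : m7 (iJ 7) = i1 ^ 7 := by rw [i1, ← m7_ex7, ← i7]
lemma m7_i14 : m7 (iJ 14) = i2 ^ 7 := by rw [i2, ← m7_ex7, ← i7]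

def K : PowerSeries ℤ := J 7 ^ 16 * iJ 14 ^ 5

lemma m7_K : m7 K = j1 ^ 112 * i2 ^ 35 := by
  rw [K, map_mul, map_pow, map_pow, m7_J7, m7_i14, ← j1]; ring

lemma t_val (t : PowerSeries ℤ) (ht : t * (J 1) ^ 4 = X * (J 7) ^ 4) :
    t = X * J 7 ^ 4 * iJ 1 ^ 4 := by
  have h : J 1 ^ 4 * iJ 1 ^ 4 = 1 := by rw [← mul_pow, J_iJ, one_pow]
  linear_combination iJ 1 ^ 4 * ht - t * h

lemma m7_t (t : PowerSeries ℤ) (ht : t * (J 1) ^ 4 = X * (J 7) ^ 4) : m7 t = T7 := by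
  rw [t_val t ht, map_mul, map_mul, map_pow, map_pow, m7_J7, m7_X, ← j1, ← i1, T7]
  linear_combination X * j1 ^ 24 * ji1' 4

lemma step1 (t : PowerSeries ℤ) (ht : t * (J 1) ^ 4 = X * (J 7) ^ 4) :
    ∃ Z, uu (F0 * ex 7 K) = 21 * t ^ 4 + 49 * Z := by
  obtain ⟨Z, hZ⟩ := uu_F0
  obtain ⟨Y, hY⟩ := seven_lift (X ^ 4 * J 2 ^ 35 * iJ 1 ^ 16 * K) (t ^ 4) (by
    rw [map_mul, m7_K, map_pow, m7_t t ht]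
    simp only [map_mul, map_pow, m7_X]
    rw [← j2, ← i1, T7]
    linear_combination X ^ 4 * j1 ^ 112 * i1 ^ 16 * ji2' 35 + X ^ 4 * j1 ^ 96 * ji1' 16)
  refine ⟨Z * K + 3 * Y, ?_⟩
  rw [uu_ex, hZ]
  linear_combination 21 * hY

lemma step2 (t : PowerSeries ℤ) (ht : t * (J 1) ^ 4 = X * (J 7) ^ 4) (Z : PowerSeries ℤ) :
    ∃ Y, uu (21 * t ^ 4 + 49 * Z) = 14 * t + 49 * Y := by
  obtain ⟨Y, hY⟩ := uu_lift (t ^ 4) (3 * t) (by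
    rw [map_pow, map_mul, m7_ofNat, m7_t t ht]; exact G_res)
  refine ⟨t + 3 * Y + uu Z, ?_⟩
  rw [uu_add, uu_ofNat, uu_ofNat, hY]; ring

lemma fin_id : (1 + A7 * D7) * X + j1 ^ 24 * i2 ^ 24 = A7 * j1 ^ 40 * i2 ^ 32 := by
  have hab := AB
  rw [B7] at hab
  have hx : X = D7 * (j1 ^ 8 * i2 ^ 16) := by
    rw [d7_val]
    linear_combination -X * (ji2' 16 + j2 ^ 16 * i2 ^ 16 * ji1' 8)
  have hc := c7_val
  have hk : (1 + A7 * D7) * D7 + c7 = A7 * c7 ^ 2 := by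
    rw [c7]
    linear_combination -A7 ^ 2 * hab
  rw [hc] at hk
  linear_combination (1 + A7 * D7) * hx + (j1 ^ 8 * i2 ^ 16) * hk

lemma step3 (t : PowerSeries ℤ) (ht : t * (J 1) ^ 4 = X * (J 7) ^ 4) (p0 : PowerSeries ℤ)
    (hp0 : (1 + 7 * p0) * ((J 1) ^ 7 * J 14) = 8 * (J 2) ^ 7 * J 7) (Z : PowerSeries ℤ) :
    ∃ Y, uu (F0 * ex 7 K * (14 * t + 49 * Z)) =
      35 * ((p0 * X + J 2 ^ 4 * J 7 ^ 4 * iJ 1 ^ 4 * iJ 14 ^ 4) *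
        (X ^ 2 * (J 7 ^ 4 * iJ 1 ^ 4) ^ 3)) + 49 * Y := by
  obtain ⟨Y, hY⟩ := uu_lift (F0 * t) (-(ea * X ^ 2 * J 2 ^ 3)) (by
    rw [map_mul, m7_t t ht, ← F7, H_res]
    simp only [map_neg, map_mul, map_pow, m7_X]
    rw [← A7, ← j2]; ring)
  obtain ⟨V, hV⟩ := seven_lift ((p0 * X + J 2 ^ 4 * J 7 ^ 4 * iJ 1 ^ 4 * iJ 14 ^ 4) *
        (X ^ 2 * (J 7 ^ 4 * iJ 1 ^ 4) ^ 3)) (ea * X ^ 2 * J 2 ^ 3 * K) (by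
    simp only [map_neg, map_add, map_mul, map_pow, m7_X, m7_K, p0_res p0 hp0, m7_J7, m7_i14]
    rw [← A7, ← j2, ← j1, ← i1]
    have e1 : (j1 ^ 7) ^ 4 * i1 ^ 4 = j1 ^ 24 := by linear_combination j1 ^ 24 * ji1' 4
    have e2 : j2 ^ 4 * (j1 ^ 7) ^ 4 * i1 ^ 4 * (i2 ^ 7) ^ 4 = j1 ^ 24 * i2 ^ 24 := by
      linear_combination j2 ^ 4 * i2 ^ 28 * e1 + j1 ^ 24 * i2 ^ 24 * ji2' 4
    rw [e1, e2, fin_id]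
    linear_combination -A7 * X ^ 2 * j1 ^ 112 * i2 ^ 32 * ji2' 3)
  refine ⟨2 * Y * K - 5 * V - ea * X ^ 2 * J 2 ^ 3 * K + uu (F0 * Z) * K, ?_⟩
  have e : F0 * ex 7 K * (14 * t + 49 * Z) =
      (14 * (F0 * t) + 49 * (F0 * Z)) * ex 7 K := by ring
  rw [e, uu_ex, uu_add, uu_ofNat, uu_ofNat, hY, hV]; ring

/-- the inclusion of power series in Laurent series -/
abbrev io : PowerSeries ℤ →+* LaurentSeries ℤ := HahnSeries.ofPowerSeries ℤ ℤ

lemma io_coeff (f : PowerSeries ℤ) (n : ℕ) : (io f).coeff (n : ℤ) = coeff n f :=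
  HahnSeries.ofPowerSeries_apply_coeff f n

lemma io_neg (f : PowerSeries ℤ) (n : ℤ) (h : n < 0) : (io f).coeff n = 0 := by
  rw [io, HahnSeries.ofPowerSeries_apply]
  apply HahnSeries.embDomain_notin_range
  rintro ⟨k, hk⟩
  simp at hk
  omega

lemma U_io (U : LaurentSeries ℤ → LaurentSeries ℤ)
    (hU : ∀ (f : LaurentSeries ℤ) (n : ℤ), (U f).coeff n = f.coeff (7 * n)) (f : PowerSeries ℤ) :
    U (io f) = io (uu f) := by
  ext n
  rw [hU]
  rcases lt_or_ge n 0 with h | h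
  · rw [io_neg _ _ h, io_neg _ _ (by omega)]
  · lift n to ℕ using h
    rw [io_coeff, uu_coeff, ← io_coeff]; push_cast; rfl

lemma io_modEq (f g Z : PowerSeries ℤ) (h : f = g + 49 * Z) (n : ℤ) :
    Int.ModEq 49 ((io f).coeff n) ((io g).coeff n) := by
  rcases lt_or_ge n 0 with hn | hn
  · rw [io_neg _ _ hn, io_neg _ _ hn]
  · lift n to ℕ using hn
    rw [io_coeff, io_coeff, h, map_add, coeff_ofNat_mul]
    exact (Int.modEq_iff_dvd.mpr ⟨-coeff n Z, by ring⟩)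

lemma A5_val (A5 : LaurentSeries ℤ)
    (hA5 : A5 * HahnSeries.ofPowerSeries ℤ ℤ ((J 1) ^ 16 * (J 98) ^ 5)
        = HahnSeries.ofPowerSeries ℤ ℤ (PowerSeries.X ^ 12 * (J 2) ^ 5 * (J 49) ^ 16)) :
    A5 = io (F0 * ex 7 K) := by
  have h : ((J 1) ^ 16 * (J 98) ^ 5) * (iJ 1 ^ 16 * iJ 98 ^ 5) = 1 := by
    have a := J_iJ 1
    have b := J_iJ 98
    calc _ = (J 1 * iJ 1) ^ 16 * (J 98 * iJ 98) ^ 5 := by ring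
      _ = 1 := by rw [a, b]; ring
  have h2 := congrArg io h
  rw [map_mul, map_one] at h2
  have h3 : F0 * ex 7 K = (X ^ 12 * (J 2) ^ 5 * (J 49) ^ 16) * (iJ 1 ^ 16 * iJ 98 ^ 5) := by
    have e1 : J 49 = ex 7 (J 7) := J_seven 7
    have e2 : iJ 98 = ex 7 (iJ 14) := i7 14
    rw [F0, K, map_mul, map_pow, map_pow, ← e1, ← e2]; ring
  rw [h3, map_mul]
  linear_combination io (iJ 1 ^ 16 * iJ 98 ^ 5) * hA5 - A5 * h2

lemma p1_val (p1 : LaurentSeries ℤ)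
    (hp1 : p1 * HahnSeries.ofPowerSeries ℤ ℤ (PowerSeries.X * (J 1) ^ 4 * (J 14) ^ 4)
        = HahnSeries.ofPowerSeries ℤ ℤ ((J 2) ^ 4 * (J 7) ^ 4)) :
    p1 * io X = io (J 2 ^ 4 * J 7 ^ 4 * iJ 1 ^ 4 * iJ 14 ^ 4) := by
  have h : ((J 1) ^ 4 * (J 14) ^ 4) * (iJ 1 ^ 4 * iJ 14 ^ 4) = 1 := by
    have a := J_iJ 1
    have b := J_iJ 14
    calc _ = (J 1 * iJ 1) ^ 4 * (J 14 * iJ 14) ^ 4 := by ring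
      _ = 1 := by rw [a, b]; ring
  have h2 := congrArg io h
  rw [map_mul, map_one] at h2
  have h4 : J 2 ^ 4 * J 7 ^ 4 * iJ 1 ^ 4 * iJ 14 ^ 4 =
    (J 2 ^ 4 * J 7 ^ 4) * (iJ 1 ^ 4 * iJ 14 ^ 4) := by ring
  rw [mul_assoc X, map_mul] at hp1
  rw [h4, map_mul]
  linear_combination io (iJ 1 ^ 4 * iJ 14 ^ 4) * hp1 - p1 * io X * h2

lemma stmt_main
    (t : PowerSeries ℤ) (ht : t * (J 1) ^ 4 = PowerSeries.X * (J 7) ^ 4)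
    (p0 : PowerSeries ℤ)
    (hp0 : (1 + 7 * p0) * ((J 1) ^ 7 * J 14) = 8 * (J 2) ^ 7 * J 7)
    (p1 : LaurentSeries ℤ)
    (hp1 : p1 * HahnSeries.ofPowerSeries ℤ ℤ (PowerSeries.X * (J 1) ^ 4 * (J 14) ^ 4)
        = HahnSeries.ofPowerSeries ℤ ℤ ((J 2) ^ 4 * (J 7) ^ 4))
    (U : LaurentSeries ℤ → LaurentSeries ℤ)
    (hU : ∀ (f : LaurentSeries ℤ) (n : ℤ), (U f).coeff n = f.coeff (7 * n))
    (A5 : LaurentSeries ℤ)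
    (hA5 : A5 * HahnSeries.ofPowerSeries ℤ ℤ ((J 1) ^ 16 * (J 98) ^ 5)
        = HahnSeries.ofPowerSeries ℤ ℤ (PowerSeries.X ^ 12 * (J 2) ^ 5 * (J 49) ^ 16))
    (L1 L2 L3 : LaurentSeries ℤ) (h1 : L1 = U A5) (h2 : L2 = U L1) (h3 : L3 = U (A5 * L2)) :
    (∀ n : ℤ, Int.ModEq 49 (L1.coeff n)
        ((21 * (HahnSeries.ofPowerSeries ℤ ℤ t) ^ 4).coeff n))
    ∧ (∀ n : ℤ, Int.ModEq 49 (L2.coeff n)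
        ((14 * HahnSeries.ofPowerSeries ℤ ℤ t).coeff n))
    ∧ (∀ n : ℤ, Int.ModEq 49 (L3.coeff n)
        ((35 * ((HahnSeries.ofPowerSeries ℤ ℤ p0 + p1) *
            (HahnSeries.ofPowerSeries ℤ ℤ t) ^ 3)).coeff n)) := by
  have hA := A5_val A5 hA5
  obtain ⟨Z1, e1⟩ := step1 t ht
  obtain ⟨Z2, e2⟩ := step2 t ht Z1
  obtain ⟨Z3, e3⟩ := step3 t ht p0 hp0 Z2
  rw [hA, U_io U hU, e1] at h1
  rw [h1, U_io U hU, e2] at h2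
  rw [h2, hA, ← map_mul, U_io U hU] at h3
  have g1 : 21 * (HahnSeries.ofPowerSeries ℤ ℤ t) ^ 4 = io (21 * t ^ 4) := by
    rw [map_mul, map_pow, map_ofNat io 21]
  have g2 : 14 * (HahnSeries.ofPowerSeries ℤ ℤ t) = io (14 * t) := by
    rw [map_mul, map_ofNat io 14]
  have g3 : 35 * ((HahnSeries.ofPowerSeries ℤ ℤ p0 + p1) * (HahnSeries.ofPowerSeries ℤ ℤ t) ^ 3)
      = io (35 * ((p0 * X + J 2 ^ 4 * J 7 ^ 4 * iJ 1 ^ 4 * iJ 14 ^ 4) *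
        (X ^ 2 * (J 7 ^ 4 * iJ 1 ^ 4) ^ 3))) := by
    have q := p1_val p1 hp1
    have et : io t = io X * io (J 7 ^ 4 * iJ 1 ^ 4) := by
      rw [← map_mul, ← mul_assoc]; exact congrArg io (t_val t ht)
    rw [map_mul io 35, map_mul io (_ + _), map_add, ← q, map_mul io p0, map_mul io (X ^ 2),
      map_pow, map_pow, map_ofNat io 35]
    change 35 * ((io p0 + p1) * (io t) ^ 3) = _
    rw [et]; ring
  refine ⟨fun n => ?_, fun n => ?_, fun n => ?_⟩
  · rw [g1, h1]; exact io_modEq _ _ _ rfl n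
  · rw [g2, h2]; exact io_modEq _ _ _ rfl n
  · rw [g3, h3]; exact io_modEq _ _ _ e3 n

end assembly

/-- in the d₅ tower, `L₁ ≡ 21·t⁴ (mod 49)`, `L₂ ≡ 14·t (mod 49)` and
`L₃ ≡ 35·(p₀+p₁)·t³ (mod 49)`, coefficientwise. Here `t = q·J_7^4/J_1^4`,
`p₀ = (8·J_2^7·J_7/(J_1^7·J_14) − 1)/7`, `p₁ = q⁻¹·J_2^4·J_7^4/(J_1^4·J_14^4)`. -/
theorem stmt14
    (t : PowerSeries ℤ) (ht : t * (J 1) ^ 4 = PowerSeries.X * (J 7) ^ 4)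
    (p0 : PowerSeries ℤ)
    (hp0 : (1 + 7 * p0) * ((J 1) ^ 7 * J 14) = 8 * (J 2) ^ 7 * J 7)
    (p1 : LaurentSeries ℤ)
    (hp1 : p1 * HahnSeries.ofPowerSeries ℤ ℤ (PowerSeries.X * (J 1) ^ 4 * (J 14) ^ 4)
        = HahnSeries.ofPowerSeries ℤ ℤ ((J 2) ^ 4 * (J 7) ^ 4))
    (U : LaurentSeries ℤ → LaurentSeries ℤ)
    (hU : ∀ (f : LaurentSeries ℤ) (n : ℤ), (U f).coeff n = f.coeff (7 * n))
    (A5 : LaurentSeries ℤ)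
    (hA5 : A5 * HahnSeries.ofPowerSeries ℤ ℤ ((J 1) ^ 16 * (J 98) ^ 5)
        = HahnSeries.ofPowerSeries ℤ ℤ (PowerSeries.X ^ 12 * (J 2) ^ 5 * (J 49) ^ 16))
    (L : ℕ → LaurentSeries ℤ) (hL0 : L 0 = 1)
    (hLodd : ∀ β : ℕ, L (2 * β + 1) = U (A5 * L (2 * β)))
    (hLeven : ∀ β : ℕ, L (2 * β + 2) = U (L (2 * β + 1))) :
    (∀ n : ℤ, Int.ModEq 49 ((L 1).coeff n)
        ((21 * (HahnSeries.ofPowerSeries ℤ ℤ t) ^ 4).coeff n))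
    ∧ (∀ n : ℤ, Int.ModEq 49 ((L 2).coeff n)
        ((14 * HahnSeries.ofPowerSeries ℤ ℤ t).coeff n))
    ∧ (∀ n : ℤ, Int.ModEq 49 ((L 3).coeff n)
        ((35 * ((HahnSeries.ofPowerSeries ℤ ℤ p0 + p1) *
            (HahnSeries.ofPowerSeries ℤ ℤ t) ^ 3)).coeff n)) := by
  refine stmt_main t ht p0 hp0 p1 hp1 U hU A5 hA5 (L 1) (L 2) (L 3) ?_ ?_ ?_
  · have h := hLodd 0
    rw [mul_zero, zero_add, hL0, mul_one] at h
    exact h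
  · exact hLeven 0
  · exact hLodd 1
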